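/- arXiv:1208.1037 — 2 statements merged into one kernel-verified Lean document; each statement's English description precedes it below -/
import Mathlib

section
/- Let K be a Hopf subalgebra of H. For any simple subcoalgebra C of H, the rank of CK as a free right K-module equals dim_k(C·Λ_K). -/
open TensorProduct

namespace MackeyPaper

noncomputable section

universe v

variable (k : Type) [Field k] [CharZero k] [IsAlgClosed k]
variable (H : Type) [Ring H] [HopfAlgebra k H]

/-- A subcoalgebra of `H`: a `k`-subspace `C` with `Δ(C) ⊆ C ⊗ C`. -/
def IsSubcoalgebra (C : Submodule k H) : Prop :=
  ∀ c ∈ C, Coalgebra.comul (R := k) c ∈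
    LinearMap.range (TensorProduct.map C.subtype C.subtype)

/-- A simple (nonzero, minimal) subcoalgebra of `H`. -/
def IsSimpleSubcoalgebra (C : Submodule k H) : Prop :=
  IsSubcoalgebra k H C ∧ C ≠ ⊥ ∧
    ∀ D : Submodule k H, D ≤ C → IsSubcoalgebra k H D → D ≠ ⊥ → D = C

/-- A Hopf subalgebra of `H`: a subalgebra which is a subcoalgebra and is
stable under the antipode. -/
def IsHopfSubalgebra (K : Subalgebra k H) : Prop :=
  IsSubcoalgebra k H K.toSubmodule ∧ ∀ x ∈ K, HopfAlgebra.antipode (R := k) x ∈ K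

/-- `Λ` is the (two-sided) idempotent integral of the Hopf subalgebra `K`,
i.e. the integral normalized by `ε(Λ) = 1`. -/
def IsIdempotentIntegral (K : Subalgebra k H) (Λ : H) : Prop :=
  Λ ∈ K ∧ Coalgebra.counit (R := k) Λ = 1 ∧
    ∀ x ∈ K, x * Λ = Coalgebra.counit (R := k) x • Λ ∧
      Λ * x = Coalgebra.counit (R := k) x • Λ

/-- A cocommutative element of `H`; the cocommutative elements of `H` form
the character ring `C(H^*)`. -/
def IsCocomm (x : H) : Prop :=
  (TensorProduct.comm k H H) (Coalgebra.comul (R := k) x) = Coalgebra.comul (R := k) x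

/-- The character ring `C(H^*)`, i.e. the space of cocommutative elements of `H`,
as a `k`-subspace of `H`. -/
def charRing : Submodule k H :=
  LinearMap.ker ((TensorProduct.comm k H H).toLinearMap ∘ₗ Coalgebra.comul (R := k)
      - Coalgebra.comul (R := k))

/-- `d` is the irreducible character (of `H^*`) associated to the simple
subcoalgebra `C`: the unique cocommutative element of `C` whose counit is the
positive square root of `dim_k C`. -/
def IsCharacterOf (d : H) (C : Submodule k H) : Prop :=
  d ∈ C ∧ IsCocomm k H d ∧
    Coalgebra.counit (R := k) d = ((Nat.sqrt (Module.finrank k ↥C) : ℕ) : k)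

/-- The right coset `CK` of a subcoalgebra `C`, i.e. the subspace `C·K`. -/
def CKsub (K : Subalgebra k H) (C : Submodule k H) : Submodule k H :=
  C * K.toSubmodule

/-- The conjugate Hopf subalgebra `ᶜK` of `K` by a simple subcoalgebra `C`
(with associated irreducible character `c`): the span of all simple
subcoalgebras of `H` whose irreducible character `d` satisfies
`d·c·Λ_K = ε(d)·c·Λ_K`.  (The condition is stated for all cocommutative
elements of `C` resp. `D`; this is equivalent, since the cocommutative
elements of a simple subcoalgebra are exactly the scalar multiples of its
irreducible character.) -/
def conjK (K : Subalgebra k H) (Λ : H) (C : Submodule k H) : Submodule k H :=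
  sSup {D : Submodule k H | IsSimpleSubcoalgebra k H D ∧
    ∀ d ∈ D, IsCocomm k H d → ∀ c ∈ C, IsCocomm k H c →
      d * (c * Λ) = Coalgebra.counit (R := k) d • (c * Λ)}

/-- A complete irredundant system of representatives (by simple subcoalgebras)
of the double cosets `L\H/K`.  (Taking `L = ⊥` gives a system of
representatives of the right cosets `H/K`.) -/
def IsDoubleCosetReps (L K : Subalgebra k H) {ι : Type} (rep : ι → Submodule k H) : Prop :=
  (∀ i, IsSimpleSubcoalgebra k H (rep i)) ∧
  (∀ i j, L.toSubmodule * rep i * K.toSubmodule = L.toSubmodule * rep j * K.toSubmodule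
      → i = j) ∧
  (∀ C : Submodule k H, IsSimpleSubcoalgebra k H C →
      ∃ i, C ≤ L.toSubmodule * rep i * K.toSubmodule)

section Ind

variable (K : Subalgebra k H) (M : Type v) [AddCommGroup M] [Module k M]
  [Module ↥K M] [IsScalarTower k ↥K M]

/-- The relations defining the induced module `H ⊗_K M` as a quotient of
`H ⊗_k M`: the `H`-submodule generated by the elements `a ⊗ m - 1 ⊗ a·m`
for `a ∈ K` (equivalently, spanned by all `h·a ⊗ m - h ⊗ a·m`). -/
def indRel : Submodule H (H ⊗[k] M) :=
  Submodule.span H {z | ∃ (a : ↥K) (m : M),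
    z = (a : H) ⊗ₜ[k] m - (1 : H) ⊗ₜ[k] (a • m)}

/-- The induced module `M↑_K^H = H ⊗_K M`, a left `H`-module. -/
abbrev Ind := (H ⊗[k] M) ⧸ indRel k H K M

variable (C : Submodule k H)

/-- The underlying space `CK ⊗_k M` of which the conjugate module `ᶜM` is a
quotient. -/
def CKM : Type _ := ↥(CKsub k H K C) ⊗[k] M

instance : AddCommGroup (CKM k H K M C) :=
  inferInstanceAs (AddCommGroup (↥(CKsub k H K C) ⊗[k] M))

instance : Module k (CKM k H K M C) :=
  inferInstanceAs (Module k (↥(CKsub k H K C) ⊗[k] M))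

/-- The pure tensor `x ⊗ m` as an element of `CK ⊗_k M`. -/
def ckmk (x : ↥(CKsub k H K C)) (m : M) : CKM k H K M C := x ⊗ₜ[k] m

/-- The relations defining the conjugate module `ᶜM = CK ⊗_K M` as a quotient
of `CK ⊗_k M`: `x·a ⊗ m - x ⊗ a·m` for `a ∈ K`. -/
def conjRel : Submodule k (CKM k H K M C) :=
  Submodule.span k {z | ∃ (x : ↥(CKsub k H K C)) (a : ↥K) (m : M)
    (hxa : (x : H) * (a : H) ∈ CKsub k H K C),
    z = ckmk k H K M C ⟨(x : H) * (a : H), hxa⟩ m - ckmk k H K M C x (a • m)}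

/-- The conjugate module `ᶜM := CK ⊗_K M`. -/
abbrev ConjM := CKM k H K M C ⧸ conjRel k H K M C

/-- The canonical copy of the conjugate module `ᶜM = CK ⊗_K M` inside
`H ⊗_K M` (the image of `CK ⊗_K M` under multiplication; this is indeed a
copy of `ᶜM` since `H` is a free right `K`-module and `CK` is one of the
coset summands). -/
def conjMsub : Submodule k (Ind k H K M) :=
  Submodule.span k {z | ∃ (x : H) (_ : x ∈ CKsub k H K C) (m : M),
    z = Submodule.Quotient.mk (x ⊗ₜ[k] m)}

end Ind

section Comp

variable (L K : Subalgebra k H) (Λ : H) (C : Submodule k H)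
variable (M : Type v) [AddCommGroup M] [Module k M] [Module ↥K M] [IsScalarTower k ↥K M]

/-- The underlying space `L ⊗_k (CK ⊗_k M)`. -/
def LCM : Type _ := ↥L ⊗[k] CKM k H K M C

instance : AddCommGroup (LCM k H L K C M) :=
  inferInstanceAs (AddCommGroup (↥L ⊗[k] CKM k H K M C))

instance : Module k (LCM k H L K C M) :=
  inferInstanceAs (Module k (↥L ⊗[k] CKM k H K M C))

/-- The pure tensor `l ⊗ w` as an element of `L ⊗_k (CK ⊗_k M)`. -/
def lcmk (l : ↥L) (w : CKM k H K M C) : LCM k H L K C M := l ⊗ₜ[k] w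

/-- The relations defining `L ⊗_{L ∩ ᶜK} ᶜM` as a quotient of
`L ⊗_k (CK ⊗_k M)`: the balancedness relations over `L ∩ ᶜK` (first set),
together with (the image of) the relations defining `ᶜM = CK ⊗_K M`
(second set). -/
def compRel : Submodule k (LCM k H L K C M) :=
  Submodule.span k
    ({z | ∃ (l : ↥L) (a : H) (haL : a ∈ L) (_ : a ∈ conjK k H K Λ C)
        (x : ↥(CKsub k H K C)) (m : M) (hax : a * (x : H) ∈ CKsub k H K C),
        z = lcmk k H L K C M ⟨(l : H) * a, mul_mem l.2 haL⟩ (ckmk k H K M C x m)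
          - lcmk k H L K C M l (ckmk k H K M C ⟨a * (x : H), hax⟩ m)} ∪
     {z | ∃ (l : ↥L) (x : ↥(CKsub k H K C)) (a : ↥K) (m : M)
        (hxa : (x : H) * (a : H) ∈ CKsub k H K C),
        z = lcmk k H L K C M l (ckmk k H K M C ⟨(x : H) * (a : H), hxa⟩ m)
          - lcmk k H L K C M l (ckmk k H K M C x (a • m))})

/-- The module `L ⊗_{L ∩ ᶜK} ᶜM` (a left `L`-module via multiplication on the
first tensor factor). -/
abbrev Comp := LCM k H L K C M ⧸ compRel k H L K Λ C M

end Comp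

open DirectSum

section Mackey

variable (L K : Subalgebra k H) (Λ : H)

/-- The Mackey isomorphism property for the pair `(L, K)` at the `K`-module
`M`: for any system of double coset representatives, the left-multiplication
map `⊕_C L ⊗_{L ∩ ᶜK} ᶜM → M↑_K^H↓_L^H`, `l ⊗ v ↦ l·v`, is an isomorphism of
`L`-modules.  (A `k`-linear map satisfying the displayed formula on the
spanning elements is automatically `L`-equivariant for the evident
`L`-actions, so this property is stated for `k`-linear maps.) -/
def MackeyAt (M : Type v) [AddCommGroup M] [Module k M] [Module ↥K M]
    [IsScalarTower k ↥K M] [Module.Finite k M] : Prop :=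
  ∀ (ι : Type) [DecidableEq ι] (rep : ι → Submodule k H),
    IsDoubleCosetReps k H L K rep →
    ∃ π : (⨁ i : ι, Comp k H L K Λ (rep i) M) →ₗ[k] Ind k H K M,
      Function.Bijective π ∧
      ∀ (i : ι) (l : ↥L) (x : ↥(CKsub k H K (rep i))) (m : M),
        π (DirectSum.of (fun i => Comp k H L K Λ (rep i) M) i
            (Submodule.Quotient.mk (lcmk k H L K (rep i) M l (ckmk k H K M (rep i) x m)))) =
          Submodule.Quotient.mk (((l : H) * (x : H)) ⊗ₜ[k] m)

/-- `(L, K)` is a Mackey pair of Hopf subalgebras of `H` (here `Λ` is the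
idempotent integral of `K`): for every finite-dimensional `K`-module `M` the
left-multiplication homomorphism `π_M` is an isomorphism. -/
def IsMackeyPair : Prop :=
  ∀ (M : Type v) [AddCommGroup M] [Module k M] [Module ↥K M]
    [IsScalarTower k ↥K M] [Module.Finite k M], MackeyAt k H L K Λ M

end Mackey


section Maschke

variable {F A : Type*} [Field F] [Ring A] [HopfAlgebra F A]

/-- For a left integral `Λ`, the element `Λ₁ ⊗ S(Λ₂)` is a Casimir element. -/
theorem tmul_one_mul_lTensor_antipode_comul {Λ : A}
    (hΛ : ∀ x : A, x * Λ = Coalgebra.counit (R := F) x • Λ) (x : A) :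
    (x ⊗ₜ[F] (1 : A)) * (HopfAlgebra.antipode F).lTensor A (Coalgebra.comul Λ) =
      (HopfAlgebra.antipode F).lTensor A (Coalgebra.comul Λ) * ((1 : A) ⊗ₜ[F] x) := by
  set S : A →ₗ[F] A := HopfAlgebra.antipode F
  set T := S.lTensor A (Coalgebra.comul Λ) with hT
  let G : (A ⊗[F] A) ⊗[F] A →ₗ[F] A ⊗[F] A :=
    TensorProduct.lift ((LinearMap.mul F (A ⊗[F] A)).compl₁₂
      (S.lTensor A ∘ₗ LinearMap.mulRight F (Coalgebra.comul Λ)) (TensorProduct.mk F A A 1))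
  have hG (u : A ⊗[F] A) (c : A) : G (u ⊗ₜ c) =
      S.lTensor A (u * Coalgebra.comul Λ) * ((1 : A) ⊗ₜ[F] c) := rfl
  have left (w : A ⊗[F] A) : G (Coalgebra.comul.rTensor A w) =
      T * ((1 : A) ⊗ₜ[F] (TensorProduct.lid F A (Coalgebra.counit.rTensor A w))) := by
    induction w with
    | zero => simp
    | add u v hu hv => simp only [map_add, hu, hv, TensorProduct.tmul_add, mul_add]
    | tmul a c =>
      rw [LinearMap.rTensor_tmul, hG, ← Bialgebra.comul_mul, hΛ, map_smul, map_smul]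
      simp [hT]
  have right (a : A) (w : A ⊗[F] A) : G ((TensorProduct.assoc F A A A).symm (a ⊗ₜ w)) =
      (a ⊗ₜ[F] (1 : A)) * T * ((1 : A) ⊗ₜ[F] LinearMap.mul' F A (S.rTensor A w)) := by
    induction w with
    | zero => simp
    | add u v hu hv => simp only [map_add, hu, hv, TensorProduct.tmul_add, mul_add]
    | tmul b c =>
      rw [TensorProduct.assoc_symm_tmul, hG, hT]
      induction (Coalgebra.comul (R := F) Λ) with
      | zero => simp
      | add u v hu hv => simp only [map_add, hu, hv, add_mul, mul_add]
      | tmul p q => simp [S, HopfAlgebra.antipode_mul_antidistrib, mul_assoc]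
  have right' (w : A ⊗[F] A) :
      G ((TensorProduct.assoc F A A A).symm (Coalgebra.comul.lTensor A w)) =
      ((TensorProduct.rid F A (Coalgebra.counit.lTensor A w)) ⊗ₜ[F] (1 : A)) * T := by
    induction w with
    | zero => simp
    | add u v hu hv => simp only [map_add, hu, hv, TensorProduct.add_tmul, add_mul]
    | tmul a c =>
      rw [LinearMap.lTensor_tmul, right, HopfAlgebra.mul_antipode_rTensor_comul_apply]
      simp [Algebra.algebraMap_eq_smul_one, ← Algebra.TensorProduct.one_def,
        ← TensorProduct.smul_tmul']
  have key := left (Coalgebra.comul x)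
  rw [← Coalgebra.coassoc_symm_apply, right'] at key
  simpa using key

/-- A Hopf algebra with a normalised left integral is semisimple. -/
theorem isSemisimpleRing_of_integral {Λ : A} (hε : Coalgebra.counit (R := F) Λ = 1)
    (hΛ : ∀ x : A, x * Λ = Coalgebra.counit (R := F) x • Λ) : IsSemisimpleRing A := by
  refine (isSemisimpleModule_iff A A).2 ⟨fun N => ?_⟩
  obtain ⟨p, hp⟩ := (N.restrictScalars F).subtype.exists_leftInverse_of_injective
    (LinearMap.ker_eq_bot.2 (Submodule.injective_subtype _))
  set P : A →ₗ[F] A := (N.restrictScalars F).subtype ∘ₗ p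
  have hPN (y : A) : P y ∈ N := (p y).2
  have hPid (y : A) (hy : y ∈ N) : P y = y :=
    congrArg Subtype.val (LinearMap.congr_fun hp ⟨y, hy⟩)
  set T := (HopfAlgebra.antipode F).lTensor A (Coalgebra.comul Λ) with hT
  let E (m : A) : A ⊗[F] A →ₗ[F] A :=
    LinearMap.mul' F A ∘ₗ (P ∘ₗ LinearMap.mulRight F m).lTensor A
  have hE (m a b : A) : E m (a ⊗ₜ b) = a * P (b * m) := rfl
  have hEadd (m m' : A) (t : A ⊗[F] A) : E (m + m') t = E m t + E m' t := by
    induction t with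
    | zero => simp
    | add u v hu hv => simp only [map_add, hu, hv]; abel
    | tmul a b => simp [hE, mul_add]
  have hEmul (x m : A) (t : A ⊗[F] A) : E (x * m) t = E m (t * ((1 : A) ⊗ₜ[F] x)) := by
    induction t with
    | zero => simp
    | add u v hu hv => simp only [map_add, hu, hv, add_mul]
    | tmul a b => simp [hE, mul_assoc]
  have hEsmul (x m : A) (t : A ⊗[F] A) : E m ((x ⊗ₜ[F] (1 : A)) * t) = x * E m t := by
    induction t with
    | zero => simp
    | add u v hu hv => simp only [map_add, hu, hv, mul_add]
    | tmul a b => simp [hE, mul_assoc]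
  have hEmem (m : A) (t : A ⊗[F] A) : E m t ∈ N := by
    induction t with
    | zero => simp
    | add u v hu hv => rw [map_add]; exact N.add_mem hu hv
    | tmul a b => rw [hE]; exact N.smul_mem a (hPN _)
  have hEid (m : A) (hm : m ∈ N) (t : A ⊗[F] A) : E m t = LinearMap.mul' F A t * m := by
    induction t with
    | zero => simp
    | add u v hu hv => simp only [map_add, hu, hv, add_mul]
    | tmul a b =>
      rw [hE, hPid (b * m) (N.smul_mem b hm)]
      simp [mul_assoc]
  let f : A →ₗ[A] N :=
    { toFun := fun m => ⟨E m T, hEmem m T⟩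
      map_add' := fun m m' => Subtype.ext (hEadd m m' T)
      map_smul' := fun x m => Subtype.ext <| by
        change E (x * m) T = x * E m T
        rw [hEmul, hT, ← tmul_one_mul_lTensor_antipode_comul hΛ, hEsmul] }
  refine ⟨_, LinearMap.isCompl_of_proj (f := f) fun y => Subtype.ext ?_⟩
  change E y T = y
  rw [hEid _ y.2, hT, HopfAlgebra.mul_antipode_lTensor_comul_apply, hε]
  simp

end Maschke

section Characters

variable {F A : Type*} [Field F] [Ring A]

/-- A finite-dimensional semisimple algebra over an algebraically closed field has finitely many
finite-dimensional representations `ρ i`, with idempotents `e i`, such that every trace function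
`φ` is the combination of the characters of the `ρ i` with coefficients `φ (e i)`. -/
theorem exists_representations_idempotents_trace [IsAlgClosed F] [Algebra F A]
    [FiniteDimensional F A] [IsSemisimpleRing A] :
    ∃ (n : ℕ) (d : Fin n → ℕ) (ρ : ∀ i, A →ₐ[F] Module.End F (Fin (d i) → F)) (e : Fin n → A),
      (∀ i, NeZero (d i)) ∧ (∀ i, IsIdempotentElem (e i)) ∧ (∀ i, e i ≠ 0) ∧
      ∀ φ : A →ₗ[F] F, (∀ x y, φ (x * y) = φ (y * x)) →
        φ = ∑ i, φ (e i) • (LinearMap.trace F (Fin (d i) → F) ∘ₗ (ρ i).toLinearMap) := by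
  obtain ⟨n, d, hd, ⟨w⟩⟩ := IsSemisimpleRing.exists_algEquiv_pi_matrix_of_isAlgClosed F A
  let E (i : Fin n) (a b : Fin (d i)) : ∀ i, Matrix (Fin (d i)) (Fin (d i)) F :=
    Pi.single i (Matrix.single a b 1)
  have hE (i : Fin n) (a b c : Fin (d i)) : E i a b * E i b c = E i a c := by
    simp [E, ← Pi.single_mul]
  have hE' (i : Fin n) (a b b' c : Fin (d i)) (h : b ≠ b') : E i a b * E i b' c = 0 := by
    simp [E, ← Pi.single_mul, h]
  refine ⟨n, d, fun i => (Matrix.toLinAlgEquiv' (R := F) (n := Fin (d i))).toAlgHom.comp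
    ((Pi.evalAlgHom F _ i).comp w.toAlgHom), fun i => w.symm (E i 0 0), hd, fun i => ?_,
    fun i => ?_, fun φ hφ => ?_⟩
  · rw [IsIdempotentElem, ← map_mul, hE]
  · rw [Ne, EmbeddingLike.map_eq_zero_iff]
    intro h
    simpa [E] using congrFun (congrFun (congrFun h i) 0) 0
  · have hdiag (i : Fin n) (a b : Fin (d i)) :
        φ (w.symm (E i a b)) = if a = b then φ (w.symm (E i 0 0)) else 0 := by
      rw [← hE i a 0 b, map_mul, hφ, ← map_mul]
      split_ifs with h
      · rw [h, hE]
      · rw [hE' _ _ _ _ _ (Ne.symm h), map_zero, map_zero]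
    ext x
    obtain ⟨y, rfl⟩ := w.symm.surjective x
    have hy : y = ∑ i, ∑ a, ∑ b, y i a b • E i a b := by
      conv_lhs => rw [← Finset.univ_sum_single y]
      refine Finset.sum_congr rfl fun i _ => ?_
      conv_lhs => rw [Matrix.matrix_eq_sum_single (y i)]
      simp_rw [← LinearMap.single_apply (R := F), map_sum, E, ← LinearMap.single_apply (R := F),
        ← map_smul]
      simp
    have hl : φ (w.symm y) = ∑ i, ∑ a, y i a a * φ (w.symm (E i 0 0)) := by
      conv_lhs => rw [hy]
      simp only [map_sum, map_smul, smul_eq_mul]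
      refine Finset.sum_congr rfl fun i _ => Finset.sum_congr rfl fun a _ => ?_
      rw [Finset.sum_eq_single a (fun b _ hb => by rw [hdiag, if_neg hb.symm, mul_zero])
        (by simp), hdiag, if_pos rfl]
    have htr (i : Fin n) : LinearMap.trace F (Fin (d i) → F) (Matrix.toLinAlgEquiv' (y i)) =
        ∑ a, y i a a := Matrix.trace_toLin'_eq (y i)
    rw [hl]
    simp [LinearMap.sum_apply, htr, Finset.sum_mul, mul_comm]

section Convolution

variable [Bialgebra F A]

/-- The convolution product of two linear functionals on a bialgebra. -/
noncomputable def convFunctional (φ ψ : A →ₗ[F] F) : A →ₗ[F] F :=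
  LinearMap.mul' F F ∘ₗ TensorProduct.map φ ψ ∘ₗ Coalgebra.comul

theorem convFunctional_sum_smul {ι κ : Type*} (s : Finset ι) (t : Finset κ) (a : ι → F) (b : κ → F)
    (φ : ι → A →ₗ[F] F) (ψ : κ → A →ₗ[F] F) (x : A) :
    convFunctional (∑ i ∈ s, a i • φ i) (∑ j ∈ t, b j • ψ j) x =
      ∑ i ∈ s, ∑ j ∈ t, a i * b j * convFunctional (φ i) (ψ j) x := by
  simp only [convFunctional, LinearMap.comp_apply]
  induction (Coalgebra.comul (R := F) x) with
  | zero => simp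
  | add u v hu hv => simp only [map_add, hu, hv, mul_add, Finset.sum_add_distrib]
  | tmul p q =>
    simp only [map_tmul, LinearMap.mul'_apply, LinearMap.sum_apply, LinearMap.smul_apply,
      smul_eq_mul, Finset.sum_mul_sum]
    exact Finset.sum_congr rfl fun i _ => Finset.sum_congr rfl fun j _ => by ring

variable {V W : Type*} [AddCommGroup V] [Module F V] [AddCommGroup W] [Module F W]

/-- The trace of the diagonal action on a tensor product is a convolution of traces. -/
theorem trace_homTensorHomMap_comul [FiniteDimensional F V] [FiniteDimensional F W]
    (α : A →ₗ[F] Module.End F V) (β : A →ₗ[F] Module.End F W) (x : A) :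
    LinearMap.trace F (V ⊗[F] W) (TensorProduct.homTensorHomMap (.id F) V W V W
      (TensorProduct.map α β (Coalgebra.comul x))) =
      convFunctional (LinearMap.trace F V ∘ₗ α) (LinearMap.trace F W ∘ₗ β) x := by
  simp only [convFunctional, LinearMap.comp_apply]
  induction (Coalgebra.comul (R := F) x) with
  | zero => simp
  | add u v hu hv => simp only [map_add, hu, hv]
  | tmul p q => simp [LinearMap.trace_tensorProduct']

/-- The diagonal action of a bialgebra on a tensor product of two representations. -/
noncomputable def tensorRepresentation (α : A →ₐ[F] Module.End F V) (β : A →ₐ[F] Module.End F W) :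
    A →ₐ[F] Module.End F (V ⊗[F] W) :=
  (Module.endTensorEndAlgHom (R := F) (S := F) (A := F)).comp
    ((Algebra.TensorProduct.map α β).comp (Bialgebra.comulAlgHom F A))

theorem tensorRepresentation_apply (α : A →ₐ[F] Module.End F V) (β : A →ₐ[F] Module.End F W)
    (x : A) : tensorRepresentation α β x = TensorProduct.homTensorHomMap (.id F) V W V W
      (TensorProduct.map α.toLinearMap β.toLinearMap (Coalgebra.comul x)) := by
  change Module.endTensorEndAlgHom (R := F) (S := F) (A := F)
    (Algebra.TensorProduct.map α β (Coalgebra.comul x)) = _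
  induction (Coalgebra.comul (R := F) x) with
  | zero => simp
  | add u v hu hv => simp only [map_add, hu, hv]
  | tmul p q => ext; simp [Module.endTensorEndAlgHom_apply]

theorem trace_tensorRepresentation [FiniteDimensional F V] [FiniteDimensional F W]
    (α : A →ₐ[F] Module.End F V) (β : A →ₐ[F] Module.End F W) (x : A) :
    LinearMap.trace F (V ⊗[F] W) (tensorRepresentation α β x) =
      convFunctional (LinearMap.trace F V ∘ₗ α.toLinearMap)
        (LinearMap.trace F W ∘ₗ β.toLinearMap) x := by
  rw [tensorRepresentation_apply, trace_homTensorHomMap_comul]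

end Convolution

theorem trace_eq_finrank_range {V : Type*} [AddCommGroup V] [Module F V] [FiniteDimensional F V]
    {f : Module.End F V} (hf : IsIdempotentElem f) :
    LinearMap.trace F V f = (Module.finrank F (LinearMap.range f) : F) :=
  (LinearMap.IsIdempotentElem.isProj_range f hf).trace

/-- A nonzero element acts nontrivially on the tensor product of the regular representation
with any nonzero representation. -/
theorem tensorRepresentation_lmul_ne_zero [HopfAlgebra F A] {W : Type*} [AddCommGroup W]
    [Module F W] [Nontrivial W] (β : A →ₐ[F] Module.End F W) {x : A} (hx : x ≠ 0) :
    tensorRepresentation (Algebra.lmul F A) β x ≠ 0 := by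
  intro h
  obtain ⟨v, hv⟩ := exists_ne (0 : W)
  let act : A →ₗ[F] W := β.toLinearMap.flip v
  let S : A →ₗ[F] A := HopfAlgebra.antipode F
  let actS : A ⊗[F] W →ₗ[F] W := TensorProduct.lift (β.toLinearMap ∘ₗ S)
  have hact : act.lTensor A (Coalgebra.comul x) = 0 := by
    have h1 := LinearMap.congr_fun h ((1 : A) ⊗ₜ v)
    rw [tensorRepresentation_apply, LinearMap.zero_apply] at h1
    rw [← h1]
    induction (Coalgebra.comul (R := F) x) with
    | zero => simp
    | add u v hu hv => simp only [map_add, hu, hv, LinearMap.add_apply]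
    | tmul p q => simp [act]
  have h2 (w : A ⊗[F] A) : actS (act.lTensor A w) = act (LinearMap.mul' F A (S.rTensor A w)) := by
    induction w with
    | zero => simp
    | add u v hu hv => simp only [map_add, hu, hv]
    | tmul p q => simp [actS, act]
  have h3 (w : A ⊗[F] A) : actS.lTensor A (TensorProduct.assoc F A A W
      (Coalgebra.comul.rTensor W (act.lTensor A w))) =
      (actS ∘ₗ act.lTensor A).lTensor A (TensorProduct.assoc F A A A
        (Coalgebra.comul.rTensor A w)) := by
    induction w with
    | zero => simp
    | add u v hu hv => simp only [map_add, hu, hv]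
    | tmul p q =>
      simp only [LinearMap.lTensor_tmul, LinearMap.rTensor_tmul]
      induction (Coalgebra.comul (R := F) p) with
      | zero => simp
      | add u v hu hv => simp only [map_add, hu, hv, add_tmul]
      | tmul a b => simp
  have h4 (w : A ⊗[F] A) : (actS ∘ₗ act.lTensor A).lTensor A (Coalgebra.comul.lTensor A w) =
      (TensorProduct.rid F A (Coalgebra.counit.lTensor A w)) ⊗ₜ v := by
    induction w with
    | zero => simp
    | add u v hu hv => simp only [map_add, hu, hv, add_tmul]
    | tmul p q =>
      simp only [LinearMap.lTensor_tmul, LinearMap.comp_apply, h2]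
      rw [HopfAlgebra.mul_antipode_rTensor_comul_apply]
      simp [act, Algebra.algebraMap_eq_smul_one, smul_tmul]
  have h5 := h3 (Coalgebra.comul x)
  rw [hact, Coalgebra.coassoc_apply, h4] at h5
  simp only [map_zero, Coalgebra.lTensor_counit_comul, TensorProduct.rid_tmul, one_smul] at h5
  refine hv ((Module.forall_dual_apply_eq_zero_iff F v).1 fun g => ?_)
  have h6 := congrArg (fun t => TensorProduct.rid F A (g.lTensor A t)) h5
  simp only [map_zero, LinearMap.lTensor_tmul, TensorProduct.rid_tmul] at h6
  exact (smul_eq_zero.1 h6.symm).resolve_right hx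

end Characters

/-- A Perron–Frobenius type statement: for the nonnegative matrix `∑ i, h i * N i j l`, every
nonnegative eigenvector is proportional to any positive one with the same eigenvalue. -/
theorem exists_forall_mul_eq_mul_of_eigenvectors {ι : Type*} [Fintype ι] [Nonempty ι]
    {h m κ : ι → ℕ} {N : ι → ι → ι → ℕ} {n : ℕ} (hh : ∀ i, h i ≠ 0) (hκ : ∀ i, κ i ≠ 0)
    (hm : ∀ l, ∑ i, ∑ j, h i * m j * N i j l = n * m l)
    (hκN : ∀ l, ∑ i, ∑ j, h i * κ j * N i j l = n * κ l)
    (hN : ∀ j l, ∃ i, N i j l ≠ 0) :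
    ∃ l, ∀ j, κ l * m j = m l * κ j := by
  obtain ⟨l, hl⟩ := Finite.exists_max fun i => (m i : ℚ) / κ i
  have hle (j : ι) : κ l * m j ≤ m l * κ j := by
    have := hl j
    rw [div_le_div_iff₀ (by exact_mod_cast Nat.pos_of_ne_zero (hκ j))
      (by exact_mod_cast Nat.pos_of_ne_zero (hκ l))] at this
    rw [mul_comm]
    exact_mod_cast this
  have hterm (i j : ι) : h i * (κ l * m j) * N i j l ≤ h i * (m l * κ j) * N i j l :=
    Nat.mul_le_mul_right _ (Nat.mul_le_mul_left _ (hle j))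
  have hsum : ∑ i, ∑ j, h i * (κ l * m j) * N i j l = ∑ i, ∑ j, h i * (m l * κ j) * N i j l := by
    calc _ = κ l * ∑ i, ∑ j, h i * m j * N i j l := by
          simp only [Finset.mul_sum]
          exact Finset.sum_congr rfl fun i _ => Finset.sum_congr rfl fun j _ => by ring
      _ = m l * ∑ i, ∑ j, h i * κ j * N i j l := by rw [hm, hκN]; ring
      _ = _ := by
          simp only [Finset.mul_sum]
          exact Finset.sum_congr rfl fun i _ => Finset.sum_congr rfl fun j _ => by ring
  refine ⟨l, fun j => ?_⟩
  obtain ⟨i, hi⟩ := hN j l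
  have hi' := (Finset.sum_eq_sum_iff_of_le fun i _ => Finset.sum_le_sum fun j _ => hterm i j).1
    hsum i (Finset.mem_univ i)
  have hj := (Finset.sum_eq_sum_iff_of_le fun j _ => hterm i j).1 hi' j (Finset.mem_univ j)
  exact Nat.eq_of_mul_eq_mul_left (Nat.pos_of_ne_zero (hh i))
    (Nat.eq_of_mul_eq_mul_right (Nat.pos_of_ne_zero hi) hj)

section HopfModules

variable {F A H : Type*} [Field F] [Ring A] [Ring H]

/-- The map `h ⊗ m ↦ h m₁ ⊗ m₂`. -/
noncomputable def mulComul (F H : Type*) [Field F] [Ring H] [Bialgebra F H] :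
    H ⊗[F] H →ₗ[F] H ⊗[F] H :=
  TensorProduct.lift ((LinearMap.mul F (H ⊗[F] H)).compl₁₂ ((TensorProduct.mk F H H).flip 1)
    Coalgebra.comul)

theorem mulComul_tmul [Bialgebra F H] (h m : H) :
    mulComul F H (h ⊗ₜ m) = (h ⊗ₜ[F] (1 : H)) * Coalgebra.comul m := rfl

theorem mulComul_mul_one_tmul [Bialgebra F H] (t : H ⊗[F] H) (y : H) :
    mulComul F H (t * ((1 : H) ⊗ₜ[F] y)) = mulComul F H t * Coalgebra.comul y := by
  induction t with
  | zero => simp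
  | add u v hu hv => simp only [map_add, hu, hv, add_mul]
  | tmul a b => simp [mulComul_tmul, mul_assoc]

theorem mulComul_injective [HopfAlgebra F H] : Function.Injective (mulComul F H) := by
  let S : H →ₗ[F] H := HopfAlgebra.antipode F
  let mulS : H ⊗[F] H →ₗ[F] H := LinearMap.mul' F H ∘ₗ S.lTensor H
  let Φ : H ⊗[F] H →ₗ[F] H ⊗[F] H :=
    mulS.rTensor H ∘ₗ (TensorProduct.assoc F H H H).symm.toLinearMap ∘ₗ Coalgebra.comul.lTensor H
  have h1 (h : H) (w : H ⊗[F] H) : Φ ((h ⊗ₜ[F] (1 : H)) * w) = (h ⊗ₜ[F] (1 : H)) * Φ w := by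
    induction w with
    | zero => simp
    | add u v hu hv => simp only [map_add, hu, hv, mul_add]
    | tmul a b =>
      simp only [Φ, LinearMap.comp_apply, Algebra.TensorProduct.tmul_mul_tmul, one_mul,
        LinearMap.lTensor_tmul]
      induction (Coalgebra.comul (R := F) b) with
      | zero => simp
      | add u v hu hv => simp only [map_add, hu, hv, mul_add, tmul_add]
      | tmul c d => simp [mulS, mul_assoc]
  have h2 (w : H ⊗[F] H) : mulS.rTensor H (Coalgebra.comul.rTensor H w) =
      (1 : H) ⊗ₜ[F] TensorProduct.lid F H (Coalgebra.counit.rTensor H w) := by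
    induction w with
    | zero => simp
    | add u v hu hv => simp only [map_add, hu, hv, tmul_add]
    | tmul a b =>
      simp only [mulS, LinearMap.rTensor_tmul, LinearMap.comp_apply]
      rw [HopfAlgebra.mul_antipode_lTensor_comul_apply]
      simp [Algebra.algebraMap_eq_smul_one, smul_tmul]
  have h3 (m : H) : Φ (Coalgebra.comul m) = (1 : H) ⊗ₜ[F] m := by
    simp only [Φ, LinearMap.comp_apply, LinearEquiv.coe_coe]
    rw [Coalgebra.coassoc_symm_apply, h2]
    simp
  refine Function.LeftInverse.injective (g := Φ) fun t => ?_
  induction t with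
  | zero => simp
  | add u v hu hv => simp only [map_add, hu, hv]
  | tmul a b => simp [mulComul_tmul, h1, h3]

section RightMul

variable [Algebra F A] [Algebra F H]

/-- The action of `A` by right multiplication on a right `A`-stable subspace of `H`. -/
noncomputable def rightMulRestrict (f : A →ₐ[F] H) (M : Submodule F H)
    (hM : ∀ m ∈ M, ∀ x, m * f x ∈ M) : A →ₗ[F] Module.End F M where
  toFun x := (LinearMap.mulRight F (f x)).restrict fun m hm => hM m hm x
  map_add' x y := by ext m; exact (congrArg _ (map_add f x y)).trans (mul_add (m : H) (f x) (f y))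
  map_smul' c x := by
    ext m; exact (congrArg _ (map_smul f c x)).trans (mul_smul_comm c (m : H) (f x))

variable {f : A →ₐ[F] H} {M : Submodule F H} (hM : ∀ m ∈ M, ∀ x, m * f x ∈ M)

@[simp]
theorem coe_rightMulRestrict_apply (x : A) (m : M) :
    (rightMulRestrict f M hM x m : H) = m * f x := rfl

theorem rightMulRestrict_mul (x y : A) :
    rightMulRestrict f M hM (x * y) = rightMulRestrict f M hM y * rightMulRestrict f M hM x := by
  ext; simp [mul_assoc]

theorem rightMulRestrict_one : rightMulRestrict f M hM 1 = 1 := by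
  ext; simp

theorem trace_rightMulRestrict_mul_comm (x y : A) :
    LinearMap.trace F M (rightMulRestrict f M hM (x * y)) =
      LinearMap.trace F M (rightMulRestrict f M hM (y * x)) := by
  rw [rightMulRestrict_mul, rightMulRestrict_mul, LinearMap.trace_mul_comm]

theorem isIdempotentElem_rightMulRestrict {e : A} (he : IsIdempotentElem e) :
    IsIdempotentElem (rightMulRestrict f M hM e) := by
  rw [IsIdempotentElem, ← rightMulRestrict_mul, he]

theorem finrank_range_rightMulRestrict (x : A) :
    Module.finrank F (LinearMap.range (rightMulRestrict f M hM x)) =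
      Module.finrank F (M.map (LinearMap.mulRight F (f x))) := by
  rw [(Submodule.equivSubtypeMap M _).finrank_eq]
  have hmap : Submodule.map M.subtype (LinearMap.range (rightMulRestrict f M hM x)) =
      M.map (LinearMap.mulRight F (f x)) := by
    ext y
    constructor
    · rintro ⟨_, ⟨m, rfl⟩, rfl⟩
      exact ⟨m, m.2, rfl⟩
    · rintro ⟨m, hm, rfl⟩
      exact ⟨_, ⟨⟨m, hm⟩, rfl⟩, rfl⟩
  rw [hmap]

end RightMul

/-- For a Hopf module `M`, the character `χ_M` satisfies `χ_H * χ_M = (dim H) χ_M`. -/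
theorem convFunctional_trace_rightMulRestrict [Bialgebra F A] [HopfAlgebra F H]
    [FiniteDimensional F H] {f : A →ₐ[F] H}
    (hf : ∀ x, TensorProduct.map f.toLinearMap f.toLinearMap (Coalgebra.comul x) =
      Coalgebra.comul (R := F) (f x))
    {M : Submodule F H} (hM : ∀ m ∈ M, ∀ x, m * f x ∈ M)
    (hΔ : ∀ m ∈ M, Coalgebra.comul (R := F) m ∈ LinearMap.range (M.subtype.lTensor H)) (x : A) :
    convFunctional (LinearMap.trace F H ∘ₗ (LinearMap.mul F H).flip ∘ₗ f.toLinearMap)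
      (LinearMap.trace F M ∘ₗ rightMulRestrict f M hM) x =
      Module.finrank F H * LinearMap.trace F M (rightMulRestrict f M hM x) := by
  set j : H ⊗[F] M →ₗ[F] H ⊗[F] H := M.subtype.lTensor H with hj
  have hjinj : Function.Injective j :=
    Module.Flat.lTensor_preserves_injective_linearMap _ M.injective_subtype
  have hmul (h : H) (t : H ⊗[F] H) (ht : t ∈ LinearMap.range j) :
      (h ⊗ₜ[F] (1 : H)) * t ∈ LinearMap.range j := by
    obtain ⟨t, rfl⟩ := ht
    induction t with
    | zero => simp
    | add u v hu hv => rw [map_add, mul_add]; exact add_mem hu hv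
    | tmul a m => exact ⟨(h * a) ⊗ₜ m, by simp [j]⟩
  have hrange (t : H ⊗[F] M) : mulComul F H (j t) ∈ LinearMap.range j := by
    induction t with
    | zero => simp
    | add u v hu hv => rw [map_add, map_add]; exact add_mem hu hv
    | tmul a m => exact hmul a _ (hΔ m m.2)
  let Ψ : H ⊗[F] M →ₗ[F] H ⊗[F] M := (LinearEquiv.ofInjective j hjinj).symm.toLinearMap ∘ₗ
    (mulComul F H ∘ₗ j).codRestrict (LinearMap.range j) hrange
  have hΨ (t : H ⊗[F] M) : j (Ψ t) = mulComul F H (j t) :=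
    congrArg Subtype.val ((LinearEquiv.ofInjective j hjinj).apply_symm_apply
      ((mulComul F H ∘ₗ j).codRestrict (LinearMap.range j) hrange t))
  have hΨinj : Function.Injective Ψ := fun s t hst =>
    hjinj (mulComul_injective (by rw [← hΨ, ← hΨ, hst]))
  let Θ : Module.End F (H ⊗[F] M) := TensorProduct.homTensorHomMap (.id F) H M H M
    (TensorProduct.map ((LinearMap.mul F H).flip ∘ₗ f.toLinearMap) (rightMulRestrict f M hM)
      (Coalgebra.comul x))
  have hΘ (t : H ⊗[F] M) : j (Θ t) = j t * Coalgebra.comul (f x) := by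
    rw [← hf]
    simp only [Θ]
    induction t with
    | zero => simp
    | add u v hu hv => simp only [map_add, hu, hv, add_mul]
    | tmul a m =>
      induction (Coalgebra.comul (R := F) x) with
      | zero => simp
      | add u v hu hv => simp only [map_add, hu, hv, mul_add, LinearMap.add_apply]
      | tmul p q => simp [j]
  have hj' (t : H ⊗[F] M) : j ((rightMulRestrict f M hM x).lTensor H t) =
      j t * ((1 : H) ⊗ₜ[F] f x) := by
    induction t with
    | zero => simp
    | add u v hu hv => simp only [map_add, hu, hv, add_mul]
    | tmul a m => simp [j]
  have hconj : (LinearEquiv.ofInjectiveEndo Ψ hΨinj).conj ((rightMulRestrict f M hM x).lTensor H) =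
      Θ := by
    refine LinearMap.ext fun t => ?_
    obtain ⟨s, rfl⟩ := (LinearEquiv.ofInjectiveEndo Ψ hΨinj).surjective t
    rw [LinearEquiv.conj_apply_apply, LinearEquiv.symm_apply_apply]
    simp only [LinearEquiv.coe_ofInjectiveEndo]
    exact hjinj (by rw [hΨ, hj', mulComul_mul_one_tmul, hΘ, hΨ])
  rw [← trace_homTensorHomMap_comul, show TensorProduct.homTensorHomMap (.id F) H M H M _ = Θ from
    rfl, ← hconj, LinearMap.trace_conj', LinearMap.lTensor, LinearMap.trace_tensorProduct',
    LinearMap.trace_id]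

end HopfModules

/-- A subspace `M` of `H` that is stable under a Hopf subalgebra with normalised integral `Λ` and
is a left coideal satisfies `dim M = dim (M Λ) * dim A`. -/
theorem finrank_eq_finrank_map_mulRight_integral_mul {F A H : Type*} [Field F] [CharZero F]
    [IsAlgClosed F] [Ring A] [Ring H] [HopfAlgebra F A] [HopfAlgebra F H] [FiniteDimensional F H]
    {f : A →ₐ[F] H} (hinj : Function.Injective f)
    (hf : ∀ x, TensorProduct.map f.toLinearMap f.toLinearMap (Coalgebra.comul x) =
      Coalgebra.comul (R := F) (f x))
    {Λ : A} (hε : Coalgebra.counit (R := F) Λ = 1)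
    (hΛ : ∀ x : A, x * Λ = Coalgebra.counit (R := F) x • Λ)
    {M : Submodule F H} (hM : ∀ m ∈ M, ∀ x, m * f x ∈ M)
    (hΔ : ∀ m ∈ M, Coalgebra.comul (R := F) m ∈ LinearMap.range (M.subtype.lTensor H)) :
    Module.finrank F M =
      Module.finrank F (M.map (LinearMap.mulRight F (f Λ))) * Module.finrank F A := by
  have : FiniteDimensional F A := FiniteDimensional.of_injective f.toLinearMap hinj
  have : IsSemisimpleRing A := isSemisimpleRing_of_integral hε hΛ
  have : Nontrivial A := ⟨Λ, 0, fun h => by simp [h] at hε⟩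
  obtain ⟨n, d, ρ, e, hd, he, he0, htr⟩ := exists_representations_idempotents_trace (F := F) (A := A)
  set R : Submodule F H := LinearMap.range f.toLinearMap with hRdef
  have hR : ∀ m ∈ R, ∀ x, m * f x ∈ R := by
    rintro _ ⟨y, rfl⟩ x
    exact ⟨y * x, by simp⟩
  have hRΔ : ∀ m ∈ R, Coalgebra.comul (R := F) m ∈ LinearMap.range (R.subtype.lTensor H) := by
    rintro _ ⟨y, rfl⟩
    rw [AlgHom.toLinearMap_apply, ← hf]
    induction (Coalgebra.comul (R := F) y) with
    | zero => simp
    | add u v hu hv => rw [map_add]; exact add_mem hu hv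
    | tmul a b => exact ⟨f a ⊗ₜ ⟨f b, b, rfl⟩, rfl⟩
  set χH : A →ₗ[F] F := LinearMap.trace F H ∘ₗ (LinearMap.mul F H).flip ∘ₗ f.toLinearMap with hχH
  set χM : A →ₗ[F] F := LinearMap.trace F M ∘ₗ rightMulRestrict f M hM with hχM
  set χR : A →ₗ[F] F := LinearMap.trace F R ∘ₗ rightMulRestrict f R hR with hχR
  set χL : A →ₗ[F] F := LinearMap.trace F A ∘ₗ (Algebra.lmul F A).toLinearMap with hχL
  let χ (i : Fin n) : A →ₗ[F] F := LinearMap.trace F (Fin (d i) → F) ∘ₗ (ρ i).toLinearMap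
  let h (i : Fin n) : ℕ := Module.finrank F (LinearMap.range ((LinearMap.mul F H).flip (f (e i))))
  let m (i : Fin n) : ℕ := Module.finrank F (LinearMap.range (rightMulRestrict f M hM (e i)))
  let κ (i : Fin n) : ℕ := Module.finrank F (LinearMap.range (rightMulRestrict f R hR (e i)))
  let N (i j l : Fin n) : ℕ :=
    Module.finrank F (LinearMap.range (tensorRepresentation (ρ i) (ρ j) (e l)))
  have hMe (x : A) (hx : IsIdempotentElem x) : χM x =
      Module.finrank F (LinearMap.range (rightMulRestrict f M hM x)) :=
    trace_eq_finrank_range (isIdempotentElem_rightMulRestrict hM hx)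
  have hRe (x : A) (hx : IsIdempotentElem x) : χR x =
      Module.finrank F (LinearMap.range (rightMulRestrict f R hR x)) :=
    trace_eq_finrank_range (isIdempotentElem_rightMulRestrict hR hx)
  have hHe (i : Fin n) : χH (e i) = h i := by
    refine trace_eq_finrank_range ?_
    ext y
    simp [mul_assoc, ← map_mul, (he i).eq]
  have hNe (i j l : Fin n) : convFunctional (χ i) (χ j) (e l) = N i j l := by
    rw [← trace_tensorRepresentation]
    exact trace_eq_finrank_range ((he l).map _)
  have hHsum : χH = ∑ i, (h i : F) • χ i := by
    simp only [← hHe]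
    refine htr χH fun x y => ?_
    have hmul (x y : A) : χH (x * y) = LinearMap.trace F H
        ((LinearMap.mul F H).flip (f y) * (LinearMap.mul F H).flip (f x)) := by
      refine congrArg (LinearMap.trace F H) ?_
      ext
      simp [mul_assoc]
    rw [hmul, hmul, LinearMap.trace_mul_comm]
  have hMsum : χM = ∑ i, (m i : F) • χ i := by
    simp only [m, ← hMe _ (he _)]
    exact htr χM (trace_rightMulRestrict_mul_comm hM)
  have hRsum : χR = ∑ i, (κ i : F) • χ i := by
    simp only [κ, ← hRe _ (he _)]
    exact htr χR (trace_rightMulRestrict_mul_comm hR)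
  have : Nonempty (Fin n) := by
    by_contra hn
    rw [not_nonempty_iff] at hn
    have h0 : χR 1 = 0 := by rw [hRsum]; simp
    rw [hRe 1 IsIdempotentElem.one, Nat.cast_eq_zero, Submodule.finrank_eq_zero,
      rightMulRestrict_one] at h0
    have h1 := congrArg Subtype.val (LinearMap.congr_fun (LinearMap.range_eq_bot.1 h0)
      ⟨f 1, 1, rfl⟩)
    exact one_ne_zero (hinj (h1.trans (map_zero f).symm))
  have hh (i : Fin n) : h i ≠ 0 := by
    intro hi
    rw [Submodule.finrank_eq_zero, LinearMap.range_eq_bot] at hi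
    exact he0 i (hinj (by simpa using LinearMap.congr_fun hi 1))
  have hκ (i : Fin n) : κ i ≠ 0 := by
    intro hi
    rw [Submodule.finrank_eq_zero, LinearMap.range_eq_bot] at hi
    exact he0 i (hinj (by simpa using congrArg Subtype.val (LinearMap.congr_fun hi ⟨f 1, 1, rfl⟩)))
  have hm (l : Fin n) : ∑ i, ∑ j, h i * m j * N i j l = Module.finrank F H * m l := by
    have := convFunctional_trace_rightMulRestrict hf hM hΔ (e l)
    rw [← hχH, ← hχM, ← LinearMap.comp_apply, ← hχM, hMe _ (he l), hHsum, hMsum,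
      convFunctional_sum_smul] at this
    simp only [hNe] at this
    exact_mod_cast this
  have hκN (l : Fin n) : ∑ i, ∑ j, h i * κ j * N i j l = Module.finrank F H * κ l := by
    have := convFunctional_trace_rightMulRestrict hf hR hRΔ (e l)
    rw [← hχH, ← hχR, ← LinearMap.comp_apply, ← hχR, hRe _ (he l), hHsum, hRsum,
      convFunctional_sum_smul] at this
    simp only [hNe] at this
    exact_mod_cast this
  have hN (j l : Fin n) : ∃ i, N i j l ≠ 0 := by
    by_contra! hN
    have hLsum : χL = ∑ i, χL (e i) • χ i := htr χL fun x y => by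
      simp only [hχL, LinearMap.comp_apply, AlgHom.toLinearMap_apply, map_mul]
      exact LinearMap.trace_mul_comm F _ _
    have hconv : convFunctional χL (χ j) (e l) = 0 := by
      have := convFunctional_sum_smul Finset.univ {j} (fun i => χL (e i)) 1 χ χ (e l)
      rw [← hLsum] at this
      simpa [hNe, hN] using this
    rw [← trace_tensorRepresentation, trace_eq_finrank_range ((he l).map _), Nat.cast_eq_zero,
      Submodule.finrank_eq_zero, LinearMap.range_eq_bot] at hconv
    have := hd j
    exact tensorRepresentation_lmul_ne_zero (ρ j) (he0 l) hconv
  obtain ⟨l, hl⟩ := exists_forall_mul_eq_mul_of_eigenvectors hh hκ hm hκN hN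
  have key : (κ l : F) • χM = (m l : F) • χR := by
    rw [hMsum, hRsum, Finset.smul_sum, Finset.smul_sum]
    refine Finset.sum_congr rfl fun j _ => ?_
    rw [smul_smul, smul_smul]
    exact_mod_cast congrArg (fun c : ℕ => (c : F) • χ j) (hl j)
  have hΛi : IsIdempotentElem Λ := by rw [IsIdempotentElem, hΛ, hε, one_smul]
  have hΛ0 : f Λ ≠ 0 := by
    rw [map_ne_zero_iff f hinj]
    rintro rfl
    simp at hε
  have hRΛ : R.map (LinearMap.mulRight F (f Λ)) = F ∙ f Λ := by
    refine le_antisymm ?_ ((Submodule.span_singleton_le_iff_mem _ _).2 ⟨1, ⟨1, by simp⟩, by simp⟩)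
    rintro _ ⟨_, ⟨y, rfl⟩, rfl⟩
    refine Submodule.mem_span_singleton.2 ⟨Coalgebra.counit (R := F) y, ?_⟩
    simp [← map_mul, hΛ]
  have h1 : κ l * Module.finrank F M = m l * Module.finrank F A := by
    have := LinearMap.congr_fun key 1
    simp only [LinearMap.smul_apply, hχM, hχR, LinearMap.comp_apply, rightMulRestrict_one,
      LinearMap.trace_one, smul_eq_mul] at this
    rw [hRdef, LinearMap.finrank_range_of_inj hinj] at this
    exact_mod_cast this
  have h2 : κ l * Module.finrank F (M.map (LinearMap.mulRight F (f Λ))) = m l := by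
    have := LinearMap.congr_fun key Λ
    rw [LinearMap.smul_apply, LinearMap.smul_apply, smul_eq_mul, smul_eq_mul, hMe Λ hΛi, hRe Λ hΛi,
      finrank_range_rightMulRestrict, finrank_range_rightMulRestrict, hRΛ,
      finrank_span_singleton hΛ0] at this
    simpa using (mod_cast this : _ = m l * 1)
  refine Nat.eq_of_mul_eq_mul_left (Nat.pos_of_ne_zero (hκ l)) ?_
  rw [h1, ← mul_assoc, h2]

section HopfSubalgebra

variable {F B : Type*} [Field F] [Ring B] [HopfAlgebra F B] (K : Subalgebra F B)

theorem map_subtype_injective : Function.Injective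
    (TensorProduct.map K.toSubmodule.subtype K.toSubmodule.subtype) :=
  TensorProduct.map_injective_of_flat_flat _ _ K.toSubmodule.injective_subtype
    K.toSubmodule.injective_subtype

variable {K} (hΔ : ∀ x ∈ K.toSubmodule, Coalgebra.comul (R := F) x ∈
    LinearMap.range (TensorProduct.map K.toSubmodule.subtype K.toSubmodule.subtype))

/-- The restriction of the comultiplication to a subalgebra that is a subcoalgebra. -/
noncomputable def comulRestrict : K →ₗ[F] K ⊗[F] K :=
  (LinearEquiv.ofInjective _ (map_subtype_injective K)).symm.toLinearMap ∘ₗ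
    (Coalgebra.comul ∘ₗ K.toSubmodule.subtype).codRestrict _ fun x => hΔ x x.2

theorem map_val_comulRestrict (x : K) :
    TensorProduct.map K.val.toLinearMap K.val.toLinearMap (comulRestrict hΔ x) =
      Coalgebra.comul (R := F) (x : B) :=
  congrArg Subtype.val ((LinearEquiv.ofInjective _ (map_subtype_injective K)).apply_symm_apply
    ((Coalgebra.comul ∘ₗ K.toSubmodule.subtype).codRestrict _ (fun x => hΔ x x.2) x))

set_option synthInstance.maxHeartbeats 100000 in
/-- A subalgebra that is a subcoalgebra is a coalgebra. -/
noncomputable abbrev coalgebraRestrict : Coalgebra F K where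
  comul := comulRestrict hΔ
  counit := Coalgebra.counit ∘ₗ K.val.toLinearMap
  coassoc := by
    have hinj : Function.Injective (TensorProduct.map K.val.toLinearMap
        (TensorProduct.map K.val.toLinearMap K.val.toLinearMap)) :=
      TensorProduct.map_injective_of_flat_flat _ _ Subtype.val_injective (map_subtype_injective K)
    ext x
    refine hinj ?_
    have h1 (t : K ⊗[F] K) : TensorProduct.map K.val.toLinearMap
        (TensorProduct.map K.val.toLinearMap K.val.toLinearMap)
        (TensorProduct.assoc F K K K ((comulRestrict hΔ).rTensor K t)) =
        TensorProduct.assoc F B B B (Coalgebra.comul.rTensor B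
          (TensorProduct.map K.val.toLinearMap K.val.toLinearMap t)) := by
      induction t with
      | zero => simp
      | add u v hu hv => simp only [map_add, hu, hv]
      | tmul a b =>
        simp only [LinearMap.rTensor_tmul, TensorProduct.map_tmul, AlgHom.toLinearMap_apply,
          Subalgebra.coe_val]
        rw [← map_val_comulRestrict hΔ a]
        induction comulRestrict hΔ a with
        | zero => simp
        | add u v hu hv => simp only [map_add, add_tmul, hu, hv]
        | tmul c d => simp
    have h2 (t : K ⊗[F] K) : TensorProduct.map K.val.toLinearMap
        (TensorProduct.map K.val.toLinearMap K.val.toLinearMap)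
        ((comulRestrict hΔ).lTensor K t) = Coalgebra.comul.lTensor B
          (TensorProduct.map K.val.toLinearMap K.val.toLinearMap t) := by
      induction t with
      | zero => simp
      | add u v hu hv => simp only [map_add, hu, hv]
      | tmul a b =>
        simp only [LinearMap.lTensor_tmul, TensorProduct.map_tmul, AlgHom.toLinearMap_apply,
          Subalgebra.coe_val, map_val_comulRestrict]
    simp only [LinearMap.comp_apply, LinearEquiv.coe_coe]
    rw [h1, h2, map_val_comulRestrict, Coalgebra.coassoc_apply]
  rTensor_counit_comp_comul := by
    ext x
    refine Module.Flat.lTensor_preserves_injective_linearMap K.val.toLinearMap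
      Subtype.val_injective ?_
    have h (t : K ⊗[F] K) : K.val.toLinearMap.lTensor F
        ((Coalgebra.counit ∘ₗ K.val.toLinearMap).rTensor K t) = Coalgebra.counit.rTensor B
          (TensorProduct.map K.val.toLinearMap K.val.toLinearMap t) := by
      induction t with
      | zero => simp
      | add u v hu hv => simp only [map_add, hu, hv]
      | tmul a b => simp
    rw [LinearMap.comp_apply, h, map_val_comulRestrict, Coalgebra.rTensor_counit_comul]
    rfl
  lTensor_counit_comp_comul := by
    ext x
    refine Module.Flat.rTensor_preserves_injective_linearMap K.val.toLinearMap
      Subtype.val_injective ?_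
    have h (t : K ⊗[F] K) : K.val.toLinearMap.rTensor F
        ((Coalgebra.counit ∘ₗ K.val.toLinearMap).lTensor K t) = Coalgebra.counit.lTensor B
          (TensorProduct.map K.val.toLinearMap K.val.toLinearMap t) := by
      induction t with
      | zero => simp
      | add u v hu hv => simp only [map_add, hu, hv]
      | tmul a b => simp
    rw [LinearMap.comp_apply, h, map_val_comulRestrict, Coalgebra.lTensor_counit_comul]
    rfl

/-- A subalgebra that is a subcoalgebra is a bialgebra. -/
noncomputable abbrev bialgebraRestrict : Bialgebra F K :=
  letI := coalgebraRestrict hΔ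
  Bialgebra.mk' F K (by exact Bialgebra.counit_one (R := F) (A := B))
    (fun {a b} => Bialgebra.counit_mul (R := F) (a : B) (b : B))
    (by
      refine map_subtype_injective K ((map_val_comulRestrict hΔ 1).trans ?_)
      exact Bialgebra.comul_one (R := F) (A := B))
    (fun {a b} => by
      refine map_subtype_injective K ((map_val_comulRestrict hΔ (a * b)).trans ?_)
      have h := map_mul (Algebra.TensorProduct.map K.val K.val) (comulRestrict hΔ a)
        (comulRestrict hΔ b)
      refine Eq.trans ?_ h.symm
      exact (Bialgebra.comul_mul (R := F) (a : B) (b : B)).trans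
        (congrArg₂ _ (map_val_comulRestrict hΔ a).symm (map_val_comulRestrict hΔ b).symm))

/-- A subalgebra that is a subcoalgebra stable under the antipode is a Hopf algebra. -/
noncomputable abbrev hopfAlgebraRestrict
    (hS : ∀ x ∈ K, HopfAlgebra.antipode (R := F) x ∈ K) : HopfAlgebra F K :=
  letI := bialgebraRestrict hΔ
  { antipode := (HopfAlgebra.antipode F).restrict (p := K.toSubmodule) (q := K.toSubmodule) hS
    mul_antipode_rTensor_comul := by
      ext x
      have h (t : K ⊗[F] K) : (LinearMap.mul' F K (((HopfAlgebra.antipode F).restrict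
          (p := K.toSubmodule) (q := K.toSubmodule) hS).rTensor K t) : B) =
          LinearMap.mul' F B ((HopfAlgebra.antipode F).rTensor B
            (TensorProduct.map K.val.toLinearMap K.val.toLinearMap t)) := by
        induction t with
        | zero => simp
        | add u v hu hv => simp only [map_add, hu, hv, Subalgebra.coe_add]
        | tmul a b => rfl
      refine (h _).trans ?_
      refine (congrArg _ (congrArg _ (map_val_comulRestrict hΔ x))).trans ?_
      exact HopfAlgebra.mul_antipode_rTensor_comul_apply (R := F) (x : B)
    mul_antipode_lTensor_comul := by
      ext x
      have h (t : K ⊗[F] K) : (LinearMap.mul' F K (((HopfAlgebra.antipode F).restrict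
          (p := K.toSubmodule) (q := K.toSubmodule) hS).lTensor K t) : B) =
          LinearMap.mul' F B ((HopfAlgebra.antipode F).lTensor B
            (TensorProduct.map K.val.toLinearMap K.val.toLinearMap t)) := by
        induction t with
        | zero => simp
        | add u v hu hv => simp only [map_add, hu, hv, Subalgebra.coe_add]
        | tmul a b => rfl
      refine (h _).trans ?_
      refine (congrArg _ (congrArg _ (map_val_comulRestrict hΔ x))).trans ?_
      exact HopfAlgebra.mul_antipode_lTensor_comul_apply (R := F) (x : B) }

end HopfSubalgebra

section Statements

variable [FiniteDimensional k H] [IsSemisimpleRing H]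

/-- Corollary 20: for a simple subcoalgebra `C` of `H`, the rank
of `CK` as a (free) right `K`-module equals `dim_k (C·Λ_K)`; equivalently,
`dim_k CK = dim_k (C·Λ_K) · dim_k K`. -/
theorem statement_7 (K : Subalgebra k H) (hK : IsHopfSubalgebra k H K)
    (Λ : H) (hΛ : IsIdempotentIntegral k H K Λ)
    (C : Submodule k H) (hC : IsSimpleSubcoalgebra k H C) :
    Module.finrank k ↥(CKsub k H K C) =
      Module.finrank k ↥(Submodule.map (LinearMap.mulRight k Λ) C) *
        Module.finrank k ↥K := by
  have hKΔ : ∀ x ∈ K.toSubmodule, Coalgebra.comul (R := k) x ∈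
      LinearMap.range (TensorProduct.map K.toSubmodule.subtype K.toSubmodule.subtype) := hK.1
  let _ : HopfAlgebra k K := hopfAlgebraRestrict hKΔ hK.2
  have hM : ∀ m ∈ CKsub k H K C, ∀ x : K, m * K.val x ∈ CKsub k H K C := by
    intro m hm x
    have hmx := Submodule.mul_mem_mul hm ((Subalgebra.mem_toSubmodule K).2 x.2)
    rwa [CKsub, mul_assoc, K.isIdempotentElem_toSubmodule.eq] at hmx
  have hcoideal : ∀ m ∈ CKsub k H K C, Coalgebra.comul (R := k) m ∈
      LinearMap.range ((CKsub k H K C).subtype.lTensor H) := by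
    intro m hm
    induction hm using Submodule.mul_induction_on' with
    | add x _ y _ hx hy => rw [map_add]; exact add_mem hx hy
    | mem_mul_mem c hc a ha =>
      rw [Bialgebra.comul_mul]
      obtain ⟨s, hs⟩ := hC.1 c hc
      obtain ⟨t, ht⟩ := hKΔ a ha
      rw [← hs, ← ht]
      clear hs ht
      induction s with
      | zero => simp
      | add u v hu hv => rw [map_add, add_mul]; exact add_mem hu hv
      | tmul p q =>
        induction t with
        | zero => simp
        | add u v hu hv => rw [map_add, mul_add]; exact add_mem hu hv
        | tmul r s =>
          exact ⟨((p : H) * r) ⊗ₜ ⟨q * s, Submodule.mul_mem_mul q.2 s.2⟩, by simp⟩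
  have hCΛ : (CKsub k H K C).map (LinearMap.mulRight k Λ) = C.map (LinearMap.mulRight k Λ) := by
    refine le_antisymm (Submodule.map_le_iff_le_comap.2 (Submodule.mul_le.2 fun c hc a ha => ?_))
      (Submodule.map_mono fun c hc => ?_)
    · refine ⟨Coalgebra.counit (R := k) a • c, C.smul_mem _ hc, ?_⟩
      simp [mul_assoc, (hΛ.2.2 a ha).1]
    · simpa [CKsub] using Submodule.mul_mem_mul hc ((Subalgebra.mem_toSubmodule K).2 K.one_mem)
  rw [← hCΛ]
  exact finrank_eq_finrank_map_mulRight_integral_mul (f := K.val) (Λ := ⟨Λ, hΛ.1⟩)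
    Subtype.val_injective (fun x => map_val_comulRestrict hKΔ x) hΛ.2.1
    (fun x => Subtype.ext (hΛ.2.2 x x.2).1) hM hcoideal

end Statements

end

end MackeyPaper
end

section
/- Let K be a Hopf subalgebra of H and let c ∈ Irr(H*) be the irreducible character of a simple subcoalgebra C of H. Then the set {}^cK = {d ∈ Irr(H*) | d·c·Λ_K = ε(d)·c·Λ_K} is closed under multiplication (every irreducible constituent of a product d·d' with d, d' ∈ {}^cK again lies in {}^cK) and closed under duality d ↦ d* = d∘S; consequently {}^C K := ⊕_{d ∈ {}^cK} C_d is a Hopf subalgebra of H, where C_d is the simple subcoalgebra associated to d. -/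
open TensorProduct

namespace MackeyPaper

noncomputable section

universe v

variable (k : Type) [Field k] [CharZero k] [IsAlgClosed k]
variable (H : Type) [Ring H] [HopfAlgebra k H]

open DirectSum

section Corep

open Coalgebra HopfAlgebra

variable {k : Type} [Field k] {H : Type} [Ring H] [HopfAlgebra k H]

/-- The operator `h ↦ f(h₁) h₂`. -/
def leftSlice (f : H →ₗ[k] k) : H →ₗ[k] H :=
  (TensorProduct.lid k H).toLinearMap ∘ₗ f.rTensor H ∘ₗ comul

/-- The operator `h ↦ f(h₂) h₁`. -/
def rightSlice (f : H →ₗ[k] k) : H →ₗ[k] H :=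
  (TensorProduct.rid k H).toLinearMap ∘ₗ f.lTensor H ∘ₗ comul

/-- A matrix `X` over `H` is a corepresentation if `Δ(Xᵢⱼ) = ∑ Xᵢₗ ⊗ Xₗⱼ` and `ε(X) = 1`. -/
structure IsCorep (k : Type) [Field k] {H : Type} [Ring H] [HopfAlgebra k H]
    {ι : Type*} [Fintype ι] [DecidableEq ι] (X : Matrix ι ι H) : Prop where
  comul_apply : ∀ i j, comul (R := k) (X i j) = ∑ l, X i l ⊗ₜ[k] X l j
  counit_apply : ∀ i j, counit (R := k) (X i j) = (1 : Matrix ι ι k) i j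

section
variable {ι κ : Type*} [Fintype ι] [DecidableEq ι] [Fintype κ] [DecidableEq κ]
  {X : Matrix ι ι H} {Y : Matrix κ κ H}

theorem IsCorep.leftSlice_apply (hX : IsCorep k X) (f : H →ₗ[k] k) (i j : ι) :
    leftSlice f (X i j) = ∑ l, f (X i l) • X l j := by
  simp [leftSlice, hX.comul_apply]

theorem IsCorep.rightSlice_apply (hX : IsCorep k X) (f : H →ₗ[k] k) (i j : ι) :
    rightSlice f (X i j) = ∑ l, f (X l j) • X i l := by
  simp [rightSlice, hX.comul_apply]

theorem IsCorep.sum_mul_antipode (hX : IsCorep k X) (i j : ι) :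
    ∑ l, X i l * antipode k (X l j) = (1 : Matrix ι ι H) i j := by
  have h := mul_antipode_lTensor_comul_apply (R := k) (X i j)
  rw [hX.comul_apply, hX.counit_apply] at h
  simpa [Matrix.one_apply, apply_ite (algebraMap k H)] using h

theorem IsCorep.sum_antipode_mul (hX : IsCorep k X) (i j : ι) :
    ∑ l, antipode k (X i l) * X l j = (1 : Matrix ι ι H) i j := by
  have h := mul_antipode_rTensor_comul_apply (R := k) (X i j)
  rw [hX.comul_apply, hX.counit_apply] at h
  simpa [Matrix.one_apply, apply_ite (algebraMap k H)] using h

theorem IsCorep.sum_antipode_mul_antipode_antipode (hX : IsCorep k X) (i j : ι) :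
    ∑ l, antipode k (X l j) * antipode k (antipode k (X i l)) = (1 : Matrix ι ι H) i j := by
  simp_rw [← antipode_mul_antidistrib, ← map_sum, hX.sum_antipode_mul]
  simp [Matrix.one_apply, apply_ite (antipode k)]

theorem IsCorep.sum_antipode_antipode_mul_antipode (hX : IsCorep k X) (i j : ι) :
    ∑ l, antipode k (antipode k (X l j)) * antipode k (X i l) = (1 : Matrix ι ι H) i j := by
  simp_rw [← antipode_mul_antidistrib, ← map_sum, hX.sum_mul_antipode]
  simp [Matrix.one_apply, apply_ite (antipode k)]

/-- The contragredient corepresentation. -/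
theorem IsCorep.antipode (hX : IsCorep k X) :
    IsCorep k (Matrix.of fun i j => antipode k (X j i)) where
  counit_apply i j := by simp [hX.counit_apply, Matrix.one_apply, eq_comm]
  comul_apply i j := by
    let A : Matrix ι ι (H ⊗[k] H) := X.map (comul (R := k))
    let B : Matrix ι ι (H ⊗[k] H) :=
      Matrix.of fun i j => comul (R := k) (HopfAlgebra.antipode k (X i j))
    let C : Matrix ι ι (H ⊗[k] H) :=
      Matrix.of fun i j => ∑ l, HopfAlgebra.antipode k (X l j) ⊗ₜ[k] HopfAlgebra.antipode k (X i l)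
    have hAB : A * B = 1 := by
      ext i j
      simp only [Matrix.mul_apply, A, B, Matrix.map_apply, Matrix.of_apply]
      simp_rw [← Bialgebra.comul_mul, ← map_sum, hX.sum_mul_antipode]
      simp [Matrix.one_apply, apply_ite (comul (R := k) (A := H)), Algebra.TensorProduct.one_def]
    have hCA : C * A = 1 := by
      ext i j
      simp only [Matrix.mul_apply, A, C, Matrix.map_apply, Matrix.of_apply, hX.comul_apply]
      simp_rw [Finset.sum_mul_sum, Algebra.TensorProduct.tmul_mul_tmul]
      calc _ = ∑ m, ∑ l, (∑ p, HopfAlgebra.antipode k (X l p) * X p m) ⊗ₜ[k]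
                (HopfAlgebra.antipode k (X i l) * X m j) := by
            simp_rw [TensorProduct.sum_tmul]
            rw [Finset.sum_comm]
            rw [Finset.sum_comm' (t' := Finset.univ) (s' := fun _ => Finset.univ) (by simp)]
            rw [Finset.sum_comm]
            refine Eq.trans ?_ Finset.sum_comm
            refine Finset.sum_congr rfl fun l _ => ?_
            rw [Finset.sum_comm]
        _ = _ := by
            simp_rw [hX.sum_antipode_mul, Matrix.one_apply, TensorProduct.ite_tmul]
            simp only [Finset.sum_ite_eq', Finset.mem_univ, if_true]
            rw [← TensorProduct.tmul_sum, hX.sum_antipode_mul]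
            simp [Matrix.one_apply, TensorProduct.tmul_ite, Algebra.TensorProduct.one_def]
    have : C = B := by rw [← mul_one C, ← hAB, ← mul_assoc, hCA, one_mul]
    simpa [B, C] using congrFun (congrFun this.symm j) i

/-- The tensor product of two corepresentations. -/
theorem IsCorep.mul (hX : IsCorep k X) (hY : IsCorep k Y) :
    IsCorep k (Matrix.of fun (p q : ι × κ) => X p.1 q.1 * Y p.2 q.2) where
  counit_apply p q := by
    simp [hX.counit_apply, hY.counit_apply, Matrix.one_apply, Prod.ext_iff, ite_and]
    split_ifs <;> rfl
  comul_apply p q := by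
    simp [Bialgebra.comul_mul, hX.comul_apply, hY.comul_apply, Finset.sum_mul_sum,
      Fintype.sum_prod_type]

end

/-- The matrix coefficients of the regular corepresentation with respect to a basis. -/
theorem exists_regular_isCorep {ι : Type*} [Fintype ι] [DecidableEq ι] (e : Module.Basis ι k H) :
    ∃ X : Matrix ι ι H, IsCorep k X ∧
      (∀ j, comul (R := k) (e j) = ∑ i, e i ⊗ₜ[k] X i j) ∧
      Submodule.span k (Set.range fun p : ι × ι => X p.1 p.2) = ⊤ := by
  let X : Matrix ι ι H := Matrix.of fun i j => leftSlice (e.coord i) (e j)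
  have key {M : Type} [AddCommGroup M] [Module k M] (z : H ⊗[k] M) :
      z = ∑ i, e i ⊗ₜ[k] TensorProduct.lid k M ((e.coord i).rTensor M z) := by
    induction z with
    | zero => simp
    | add x y hx hy =>
      simp only [map_add, TensorProduct.tmul_add, Finset.sum_add_distrib, ← hx, ← hy]
    | tmul x y =>
      conv_lhs => rw [← e.sum_repr x, TensorProduct.sum_tmul]
      simp [TensorProduct.smul_tmul]
  have inj {M : Type} [AddCommGroup M] [Module k M] (f g : ι → M)
      (h : ∑ i, e i ⊗ₜ[k] f i = ∑ i, e i ⊗ₜ[k] g i) (i : ι) : f i = g i := by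
    have := congrArg (fun z => TensorProduct.lid k M ((e.coord i).rTensor M z)) h
    simpa [Finsupp.single_apply, ite_smul] using this
  have hX (j) : comul (R := k) (e j) = ∑ i, e i ⊗ₜ[k] X i j := key _
  refine ⟨X, ⟨fun i j => ?_, fun i j => ?_⟩, hX, ?_⟩
  · have h := coassoc_apply (R := k) (e j)
    rw [hX] at h
    simp only [map_sum, LinearMap.rTensor_tmul, LinearMap.lTensor_tmul, hX,
      TensorProduct.sum_tmul, TensorProduct.assoc_tmul] at h
    rw [Finset.sum_comm] at h
    simp_rw [← TensorProduct.tmul_sum] at h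
    exact (inj _ _ h i).symm
  · have h := lTensor_counit_comul (R := k) (e j)
    rw [hX] at h
    simp only [map_sum, LinearMap.lTensor_tmul] at h
    have h2 : e j ⊗ₜ[k] (1 : k) = ∑ i, e i ⊗ₜ[k] (1 : Matrix ι ι k) i j := by
      simp [Matrix.one_apply, TensorProduct.tmul_ite]
    exact inj _ _ (h.trans h2) i
  · rw [eq_top_iff, ← e.span_eq, Submodule.span_le]
    rintro _ ⟨j, rfl⟩
    have h := rTensor_counit_comul (R := k) (e j)
    rw [hX] at h
    have h2 := congrArg (TensorProduct.lid k H) h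
    simp only [map_sum, LinearMap.rTensor_tmul, TensorProduct.lid_tmul, one_smul] at h2
    rw [← h2]
    exact Submodule.sum_mem _ fun i _ =>
      Submodule.smul_mem _ _ (Submodule.subset_span ⟨(i, j), rfl⟩)

/-- Two linear maps on `H` agree if they agree on a spanning corepresentation. -/
theorem linearMap_ext_of_span {ι : Type*} {X : Matrix ι ι H} {M : Type*}
    [AddCommGroup M] [Module k M]
    (hs : Submodule.span k (Set.range fun p : ι × ι => X p.1 p.2) = ⊤) {f g : H →ₗ[k] M}
    (h : ∀ i j, f (X i j) = g (X i j)) : f = g :=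
  LinearMap.ext_on_range hs fun p => h p.1 p.2

end Corep

section Integral

open Coalgebra HopfAlgebra

variable {k : Type} [Field k] {H : Type} [Ring H] [HopfAlgebra k H]

/-- A two-sided integral of `H` normalized by `ε(Λ) = 1`. -/
structure IsNormalizedIntegral (k : Type) [Field k] {H : Type} [Ring H] [HopfAlgebra k H]
    (Λ : H) : Prop where
  mul_left : ∀ x, x * Λ = counit (R := k) x • Λ
  mul_right : ∀ x, Λ * x = counit (R := k) x • Λ
  counit_eq : counit (R := k) Λ = 1

theorem exists_left_integral {A : Type*} [Ring A] [Algebra k A] [IsSemisimpleRing A]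
    (ε : A →ₐ[k] k) : ∃ Λ : A, ε Λ = 1 ∧ ∀ x, x * Λ = ε x • Λ := by
  let I : Submodule A A := RingHom.ker ε
  obtain ⟨J, hJ⟩ := exists_isCompl I
  obtain ⟨a, ha, Λ, hΛ, h1⟩ :=
    Submodule.mem_sup.1 (hJ.sup_eq_top ▸ Submodule.mem_top (x := (1 : A)))
  have ha' : ε a = 0 := ha
  have hε : ε Λ = 1 := by
    have := congrArg ε h1
    simpa [ha'] using this
  refine ⟨Λ, hε, fun x => ?_⟩
  have h : (x - algebraMap k A (ε x)) * Λ ∈ I ⊓ J :=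
    ⟨(by simp : ε ((x - algebraMap k A (ε x)) * Λ) = 0), J.smul_mem _ hΛ⟩
  rw [hJ.inf_eq_bot, Submodule.mem_bot, sub_mul, sub_eq_zero, ← Algebra.smul_def] at h
  exact h

theorem exists_isNormalizedIntegral [IsSemisimpleRing H] :
    ∃ Λ : H, IsNormalizedIntegral k Λ := by
  obtain ⟨Λ, h1, h2⟩ := exists_left_integral (Bialgebra.counitAlgHom k H)
  obtain ⟨Λ', h1', h2'⟩ := exists_left_integral
    ((Bialgebra.counitAlgHom k H).fromOpposite fun x y => Commute.all _ _)
  have hright (x : H) : Λ'.unop * x = counit (R := k) x • Λ'.unop := by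
    have := congrArg MulOpposite.unop (h2' (MulOpposite.op x))
    simpa using this
  have hcounit : counit (R := k) Λ'.unop = 1 := h1'
  have h1 : counit (R := k) Λ = 1 := h1
  have h2 (x : H) : x * Λ = counit (R := k) x • Λ := h2 x
  have : Λ'.unop = Λ := by
    have a := h2 Λ'.unop
    rw [hright, h1, hcounit, one_smul, one_smul] at a
    exact a
  exact ⟨Λ, h2, this ▸ hright, h1⟩

/-- The element `S(Λ₂) Λ₁`. -/
def drinfeld (k : Type) [Field k] {H : Type} [Ring H] [HopfAlgebra k H] (Λ : H) : H :=
  LinearMap.mul' k H ((TensorProduct.comm k H H) ((antipode k).lTensor H (comul (R := k) Λ)))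

variable {Λ : H}

theorem drinfeld_mul [FiniteDimensional k H] (hΛ : IsNormalizedIntegral k Λ) (h : H) :
    drinfeld k Λ * h = antipode k (antipode k h) * drinfeld k Λ := by
  obtain ⟨X, hX, -, hs⟩ := exists_regular_isCorep (Module.finBasis k H)
  let T : H ⊗[k] H →ₗ[k] H :=
    LinearMap.mul' k H ∘ₗ (TensorProduct.comm k H H).toLinearMap ∘ₗ (antipode k).lTensor H
  have hT (z : H ⊗[k] H) (a b : H) : T (z * a ⊗ₜ b) = antipode k b * T z * a := by
    induction z with
    | zero => simp
    | add x y hx hy => simp [add_mul, mul_add, hx, hy]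
    | tmul x y => simp [T, antipode_mul_antidistrib, mul_assoc]
  have hu : T (comul Λ) = drinfeld k Λ := rfl
  have key (i j) : ∑ l, antipode k (X l j) * drinfeld k Λ * X i l =
      (1 : Matrix _ _ k) i j • drinfeld k Λ := by
    have h := congrArg (fun z => T (comul z)) (hΛ.mul_right (X i j))
    simp only [Bialgebra.comul_mul, hX.comul_apply, hX.counit_apply, Finset.mul_sum, map_sum,
      map_smul, hT, hu] at h
    exact h
  have : LinearMap.mulLeft k (drinfeld k Λ) =
      LinearMap.mulRight k (drinfeld k Λ) ∘ₗ antipode k ∘ₗ antipode k := by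
    refine linearMap_ext_of_span hs fun i m => ?_
    calc drinfeld k Λ * X i m
        = ∑ l, (∑ j, antipode k (antipode k (X j m)) * antipode k (X l j)) *
            drinfeld k Λ * X i l := by
          simp_rw [hX.sum_antipode_antipode_mul_antipode, Matrix.one_apply]
          simp [ite_mul]
      _ = ∑ j, antipode k (antipode k (X j m)) *
            ∑ l, antipode k (X l j) * drinfeld k Λ * X i l := by
          simp_rw [Finset.sum_mul, Finset.mul_sum, mul_assoc]
          rw [Finset.sum_comm]
      _ = antipode k (antipode k (X i m)) * drinfeld k Λ := by
          simp_rw [key, Matrix.one_apply]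
          simp
  exact LinearMap.congr_fun this h

theorem trace_drinfeld (hΛ : IsNormalizedIntegral k Λ) (τ : H →ₗ[k] k)
    (hτ : ∀ x y, τ (x * y) = τ (y * x)) : τ (drinfeld k Λ) = τ 1 := by
  have h (z : H ⊗[k] H) : τ (LinearMap.mul' k H ((TensorProduct.comm k H H) z)) =
      τ (LinearMap.mul' k H z) := by
    induction z with
    | zero => simp
    | add x y hx hy => simp [hx, hy]
    | tmul x y => simp [hτ]
  rw [drinfeld, h, mul_antipode_lTensor_comul_apply, hΛ.counit_eq, map_one]

theorem isUnit_of_forall_commute_twist {n : ℕ} (u : Matrix (Fin n) (Fin n) k) (hu : u ≠ 0)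
    (σ : Matrix (Fin n) (Fin n) k → Matrix (Fin n) (Fin n) k) (h : ∀ x, u * x = σ x * u) :
    IsUnit u := by
  rw [← Matrix.mulVec_injective_iff_isUnit, ← Matrix.coe_mulVecLin, ← LinearMap.ker_eq_bot,
    LinearMap.ker_eq_bot']
  intro v hv
  by_contra hne
  obtain ⟨i, hi⟩ := Function.ne_iff.1 hne
  apply hu
  ext a j
  have h1 : (u * Matrix.single j i 1).mulVec v = 0 := by
    rw [h, ← Matrix.mulVec_mulVec]
    rw [Matrix.mulVecLin_apply] at hv
    rw [hv, Matrix.mulVec_zero]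
  have h2 := congrFun h1 a
  rw [← Matrix.mulVec_mulVec, Matrix.single_mulVec] at h2
  have h3 : Function.update (0 : Fin n → k) j (1 * v i) =
      Pi.single (M := fun _ => k) j (1 * v i) := rfl
  rw [h3, Matrix.mulVec_single] at h2
  simpa [show v i ≠ 0 from hi] using h2

variable [CharZero k]

theorem isUnit_drinfeld [FiniteDimensional k H] [IsAlgClosed k] [IsSemisimpleRing H]
    (hΛ : IsNormalizedIntegral k Λ) :
    IsUnit (drinfeld k Λ) := by
  obtain ⟨n, d, hd, ⟨W⟩⟩ := IsSemisimpleRing.exists_algEquiv_pi_matrix_of_isAlgClosed k H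
  rw [← MulEquiv.isUnit_map W, Pi.isUnit_iff]
  intro i
  refine isUnit_of_forall_commute_twist _ (fun h0 => ?_)
    (fun x => W (antipode k (antipode k (W.symm (Pi.single i x)))) i) fun x => ?_
  · let τ : H →ₗ[k] k := Matrix.traceLinearMap (Fin (d i)) k k ∘ₗ LinearMap.proj i ∘ₗ W.toLinearMap
    have := trace_drinfeld hΛ τ fun x y => by
      simpa [τ] using Matrix.trace_mul_comm _ _
    simp [τ, h0] at this
    exact (hd i).out (by exact_mod_cast this.symm)
  · have := congrArg (fun y => W y i) (drinfeld_mul hΛ (W.symm (Pi.single i x)))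
    simpa using this

theorem antipode_bijective (k : Type) [Field k] [CharZero k] [IsAlgClosed k]
    (H : Type) [Ring H] [HopfAlgebra k H] [FiniteDimensional k H] [IsSemisimpleRing H] :
    Function.Bijective (antipode k : H →ₗ[k] H) := by
  obtain ⟨Λ, hΛ⟩ := exists_isNormalizedIntegral (k := k) (H := H)
  have hinj : Function.Injective (antipode k : H →ₗ[k] H) := by
    rw [← LinearMap.ker_eq_bot, LinearMap.ker_eq_bot']
    intro h hh
    have := drinfeld_mul hΛ h
    rw [hh, map_zero, zero_mul] at this
    exact (isUnit_drinfeld hΛ).mul_right_eq_zero.1 this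
  exact ⟨hinj, LinearMap.surjective_of_injective hinj⟩

end Integral

section TraceIntegral

open Coalgebra HopfAlgebra

variable {k : Type} [Field k] {H : Type} [Ring H] [HopfAlgebra k H]

/-- A functional `ρ` with `ρ(h₁) h₂ = ρ(h) 1`. -/
def IsRightIntegral (ρ : H →ₗ[k] k) : Prop := ∀ h, leftSlice ρ h = ρ h • 1

/-- The functional `h ↦ Tr(x ↦ S²(x) h)`. -/
def traceIntegral (k : Type) [Field k] (H : Type) [Ring H] [HopfAlgebra k H] : H →ₗ[k] k :=
  LinearMap.trace k H ∘ₗ (LinearMap.lcomp k H (antipode k ∘ₗ antipode k)) ∘ₗ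
    (LinearMap.mul k H).flip

theorem traceIntegral_apply (h : H) : traceIntegral k H h =
    LinearMap.trace k H (LinearMap.mulRight k h ∘ₗ antipode k ∘ₗ antipode k) := rfl

theorem traceIntegral_mul (x y : H) :
    traceIntegral k H (x * y) = traceIntegral k H (antipode k (antipode k y) * x) := by
  have h1 : LinearMap.mulRight k (x * y) ∘ₗ antipode k ∘ₗ antipode k =
      LinearMap.mulRight k y ∘ₗ (LinearMap.mulRight k x ∘ₗ antipode k ∘ₗ antipode k) := by
    ext z; simp [mul_assoc]
  have h2 : LinearMap.mulRight k (antipode k (antipode k y) * x) ∘ₗ antipode k ∘ₗ antipode k =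
      (LinearMap.mulRight k x ∘ₗ antipode k ∘ₗ antipode k) ∘ₗ LinearMap.mulRight k y := by
    ext z; simp [mul_assoc, antipode_mul_antidistrib]
  rw [traceIntegral_apply, traceIntegral_apply, h1, h2]
  exact LinearMap.trace_mul_comm k _ _

theorem traceIntegral_one :
    traceIntegral k H 1 = LinearMap.trace k H (antipode k ∘ₗ antipode k) := by
  rw [traceIntegral_apply, LinearMap.mulRight_one, LinearMap.id_comp]

theorem traceIntegral_integral [FiniteDimensional k H] {Λ : H} (hΛ : IsNormalizedIntegral k Λ) :
    traceIntegral k H Λ = 1 := by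
  have h : LinearMap.mulRight k Λ ∘ₗ antipode k ∘ₗ antipode k =
      (counit (R := k) (A := H)).smulRight Λ := by
    ext z; simp [hΛ.mul_left]
  rw [traceIntegral_apply, h, LinearMap.trace_smulRight, hΛ.counit_eq]

variable [FiniteDimensional k H]

theorem comul_antipode (h : H) : comul (R := k) (antipode k h) =
    TensorProduct.map (antipode k) (antipode k) (TensorProduct.comm k H H (comul (R := k) h)) := by
  obtain ⟨X, hX, -, hs⟩ := exists_regular_isCorep (Module.finBasis k H)
  have : comul (R := k) ∘ₗ antipode k =
      TensorProduct.map (antipode k) (antipode k) ∘ₗ (TensorProduct.comm k H H).toLinearMap ∘ₗ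
        comul (R := k) (A := H) := by
    refine linearMap_ext_of_span hs fun i j => ?_
    have := hX.antipode.comul_apply j i
    simpa [hX.comul_apply] using this
  exact LinearMap.congr_fun this h

theorem isRightIntegral_traceIntegral : IsRightIntegral (traceIntegral k H) := by
  let e := Module.finBasis k H
  obtain ⟨X, hX, hXe, hs⟩ := exists_regular_isCorep e
  let q (h : H) (i j) : k := e.coord i (antipode k (antipode k (e j)) * h)
  have hq (h : H) (j) : antipode k (antipode k (e j)) * h = ∑ i, q h i j • e i :=
    (e.sum_repr _).symm
  have hl (h : H) : traceIntegral k H h = ∑ i, q h i i := by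
    rw [traceIntegral_apply, LinearMap.trace_eq_matrix_trace k e, Matrix.trace]
    simp [LinearMap.toMatrix_apply, q]
  have hSS (j) : comul (R := k) (antipode k (antipode k (e j))) =
      ∑ i, antipode k (antipode k (e i)) ⊗ₜ[k] antipode k (antipode k (X i j)) := by
    simp [comul_antipode, hXe]
  have inj (f g : Fin _ → H) (h : ∑ i, e i ⊗ₜ[k] f i = ∑ i, e i ⊗ₜ[k] g i) (i) : f i = g i := by
    have := congrArg (fun z => TensorProduct.lid k H ((e.coord i).rTensor H z)) h
    simpa [Finsupp.single_apply, ite_smul] using this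
  have key (a b j n) : ∑ m, q (X a b) m j • X n m =
      ∑ i, ∑ c, q (X a c) n i • (antipode k (antipode k (X i j)) * X c b) := by
    refine inj (fun n => ∑ m, q (X a b) m j • X n m) (fun n => ∑ i, ∑ c, q (X a c) n i •
      (antipode k (antipode k (X i j)) * X c b)) ?_ n
    have h := congrArg (comul (R := k)) (hq (X a b) j)
    rw [Bialgebra.comul_mul, hSS, hX.comul_apply, Finset.sum_mul_sum] at h
    simp_rw [Algebra.TensorProduct.tmul_mul_tmul, hq, map_sum, map_smul, hXe,
      TensorProduct.sum_tmul] at h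
    simp_rw [TensorProduct.tmul_sum, TensorProduct.tmul_smul]
    rw [Finset.sum_comm]
    simp_rw [← Finset.smul_sum]
    rw [← h]
    symm
    rw [Finset.sum_comm]
    refine Finset.sum_congr rfl fun i _ => ?_
    rw [Finset.sum_comm]
    simp [TensorProduct.smul_tmul']
  have key2 (a b n p) : ∑ j, ∑ m, q (X a b) m j • (antipode k (X j p) * X n m) =
      ∑ c, q (X a c) n p • X c b := by
    calc _ = ∑ j, antipode k (X j p) * ∑ m, q (X a b) m j • X n m := by
          simp [Finset.mul_sum]
      _ = ∑ i, ∑ c, q (X a c) n i •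
            ((∑ j, antipode k (X j p) * antipode k (antipode k (X i j))) * X c b) := by
          simp_rw [key, Finset.mul_sum, Finset.sum_mul, Finset.smul_sum]
          rw [Finset.sum_comm]
          refine Finset.sum_congr rfl fun i _ => ?_
          rw [Finset.sum_comm]
          simp [mul_assoc]
      _ = _ := by
          simp_rw [hX.sum_antipode_mul_antipode_antipode, Matrix.one_apply]
          simp [ite_mul, Finset.sum_ite_irrel]
  have : leftSlice (traceIntegral k H) =
      (traceIntegral k H).smulRight (1 : H) := by
    refine linearMap_ext_of_span hs fun a b => ?_
    rw [hX.leftSlice_apply, LinearMap.smulRight_apply]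
    simp_rw [hl, Finset.sum_smul]
    rw [Finset.sum_comm]
    simp_rw [← key2]
    rw [Finset.sum_comm]
    refine Finset.sum_congr rfl fun j _ => ?_
    rw [Finset.sum_comm]
    simp_rw [← Finset.smul_sum, hX.sum_antipode_mul, Matrix.one_apply]
    simp
  exact fun h => LinearMap.congr_fun this h

end TraceIntegral

section Radford

open Coalgebra HopfAlgebra

variable {k : Type} [Field k] {H : Type} [Ring H] [HopfAlgebra k H]

theorem leftSlice_mul {ι : Type*} [Fintype ι] [DecidableEq ι] {X : Matrix ι ι H} (hX : IsCorep k X)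
    (ρ : H →ₗ[k] k) (x : H) (i j : ι) :
    leftSlice ρ (x * X i j) = ∑ l, leftSlice (ρ ∘ₗ LinearMap.mulRight k (X i l)) x * X l j := by
  simp only [leftSlice, LinearMap.comp_apply, Bialgebra.comul_mul, hX.comul_apply]
  generalize comul (R := k) x = z
  induction z with
  | zero => simp
  | add x y hx hy => simp only [add_mul, map_add, hx, hy, Finset.sum_add_distrib]
  | tmul x y => simp [Finset.mul_sum]

theorem IsRightIntegral.leftSlice_mulRight {ρ : H →ₗ[k] k} (hρ : IsRightIntegral ρ)
    {ι : Type*} [Fintype ι] [DecidableEq ι] {X : Matrix ι ι H} (hX : IsCorep k X)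
    (x : H) (i j : ι) :
    leftSlice (ρ ∘ₗ LinearMap.mulRight k (X i j)) x =
      ∑ l, ρ (x * X i l) • antipode k (X l j) := by
  have h (l) : ρ (x * X i l) • antipode k (X l j) =
      ∑ m, leftSlice (ρ ∘ₗ LinearMap.mulRight k (X i m)) x * (X m l * antipode k (X l j)) := by
    have := hρ (x * X i l)
    rw [leftSlice_mul hX] at this
    rw [← one_mul (antipode k (X l j)), ← smul_mul_assoc, ← this, Finset.sum_mul]
    simp [mul_assoc]
  simp_rw [h]
  rw [Finset.sum_comm]
  simp_rw [← Finset.mul_sum, hX.sum_mul_antipode, Matrix.one_apply]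
  simp

variable [FiniteDimensional k H]

theorem IsRightIntegral.leftSlice_mulRight_integral {ρ : H →ₗ[k] k} (hρ : IsRightIntegral ρ)
    {Λ : H} (hΛ : IsNormalizedIntegral k Λ) (y : H) :
    leftSlice (ρ ∘ₗ LinearMap.mulRight k y) Λ = ρ Λ • antipode k y := by
  obtain ⟨X, hX, -, hs⟩ := exists_regular_isCorep (Module.finBasis k H)
  let T : (H →ₗ[k] k) →ₗ[k] H :=
    { toFun := fun f => leftSlice f Λ
      map_add' := fun f g => by simp [leftSlice, LinearMap.rTensor_add]
      map_smul' := fun r f => by simp [leftSlice, LinearMap.rTensor_smul] }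
  have : T ∘ₗ (LinearMap.llcomp k H H k ρ) ∘ₗ (LinearMap.mul k H).flip = ρ Λ • antipode k := by
    refine linearMap_ext_of_span hs fun i j => ?_
    refine (hρ.leftSlice_mulRight hX Λ i j).trans ?_
    simp_rw [hΛ.mul_right, hX.counit_apply, Matrix.one_apply, map_smul]
    simp [ite_smul]
  exact LinearMap.congr_fun this y

variable [CharZero k] [IsAlgClosed k] [IsSemisimpleRing H]

theorem eq_zero_of_traceIntegral_mul_left {y : H} (h : ∀ z, traceIntegral k H (z * y) = 0) :
    y = 0 := by
  obtain ⟨Λ, hΛ⟩ := exists_isNormalizedIntegral (k := k) (H := H)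
  have h0 : traceIntegral k H ∘ₗ LinearMap.mulRight k y = 0 := by ext z; simp [h]
  have := isRightIntegral_traceIntegral.leftSlice_mulRight_integral hΛ y
  rw [h0, traceIntegral_integral hΛ, one_smul] at this
  apply (antipode_bijective k H).1
  rw [← this]
  simp [leftSlice]

theorem eq_zero_of_traceIntegral_mul_right {y : H} (h : ∀ z, traceIntegral k H (y * z) = 0) :
    y = 0 := by
  obtain ⟨y, rfl⟩ := (antipode_bijective k H).2 y
  obtain ⟨y, rfl⟩ := (antipode_bijective k H).2 y
  rw [eq_zero_of_traceIntegral_mul_left (k := k) (y := y) fun z => by rw [traceIntegral_mul, h]]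
  simp

theorem IsRightIntegral.eq_smul {ρ : H →ₗ[k] k} (hρ : IsRightIntegral ρ)
    {Λ : H} (hΛ : IsNormalizedIntegral k Λ) : ρ = ρ Λ • traceIntegral k H := by
  let T : (H →ₗ[k] k) →ₗ[k] H :=
    { toFun := fun f => leftSlice f Λ
      map_add' := fun f g => by simp [leftSlice, LinearMap.rTensor_add]
      map_smul' := fun r f => by simp [leftSlice, LinearMap.rTensor_smul] }
  have hT : Function.Surjective T := fun y => by
    obtain ⟨y, rfl⟩ := (antipode_bijective k H).2 y
    refine ⟨_, (isRightIntegral_traceIntegral.leftSlice_mulRight_integral hΛ y).trans ?_⟩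
    rw [traceIntegral_integral hΛ, one_smul]
  have hTi : Function.Injective T :=
    (LinearMap.injective_iff_surjective_of_finrank_eq_finrank
      (Subspace.dual_finrank_eq (K := k) (V := H))).2 hT
  apply hTi
  have h1 := hρ.leftSlice_mulRight_integral hΛ 1
  have h2 := (isRightIntegral_traceIntegral (k := k) (H := H)).leftSlice_mulRight_integral hΛ 1
  rw [LinearMap.mulRight_one, LinearMap.comp_id] at h1 h2
  rw [map_smul]
  change leftSlice _ _ = _ • leftSlice _ _
  rw [h1, h2, traceIntegral_integral hΛ, one_smul]

theorem exists_distinguished (k : Type) [Field k] [CharZero k] [IsAlgClosed k]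
    (H : Type) [Ring H] [HopfAlgebra k H] [FiniteDimensional k H] [IsSemisimpleRing H] :
    ∃ g : H, IsGroupLikeElem k g ∧
      ∀ h, rightSlice (traceIntegral k H) h = traceIntegral k H h • g := by
  obtain ⟨X, hX, -, hs⟩ := exists_regular_isCorep (Module.finBasis k H)
  obtain ⟨Λ, hΛ⟩ := exists_isNormalizedIntegral (k := k) (H := H)
  set g := rightSlice (traceIntegral k H) Λ with hg
  have hl (i j) : ∑ l, traceIntegral k H (X i l) • X l j = traceIntegral k H (X i j) • 1 := by
    rw [← hX.leftSlice_apply, isRightIntegral_traceIntegral]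
  have hρ_int (f : H →ₗ[k] k) : IsRightIntegral (f ∘ₗ rightSlice (traceIntegral k H)) := by
    have : leftSlice (f ∘ₗ rightSlice (traceIntegral k H)) =
        (f ∘ₗ rightSlice (traceIntegral k H)).smulRight (1 : H) := by
      refine linearMap_ext_of_span hs fun i j => ?_
      simp only [hX.leftSlice_apply, LinearMap.comp_apply, hX.rightSlice_apply,
        LinearMap.smulRight_apply, map_sum, Finset.sum_smul, map_smul, smul_eq_mul]
      rw [Finset.sum_comm]
      refine Finset.sum_congr rfl fun l _ => ?_
      rw [mul_comm, mul_smul, ← hl, Finset.smul_sum]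
      refine Finset.sum_congr rfl fun m _ => ?_
      rw [mul_comm, mul_smul]
    exact fun h => LinearMap.congr_fun this h
  have hr (h) : rightSlice (traceIntegral k H) h = traceIntegral k H h • g := by
    rw [← sub_eq_zero, ← Module.forall_dual_apply_eq_zero_iff k]
    intro f
    have := LinearMap.congr_fun ((hρ_int f).eq_smul hΛ) h
    rw [LinearMap.comp_apply] at this
    rw [map_sub, this]
    simp [hg, mul_comm]
  refine ⟨g, ⟨?_, ?_⟩, hr⟩
  · have h2 : counit (R := k) ∘ₗ rightSlice (traceIntegral k H) = traceIntegral k H := by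
      refine linearMap_ext_of_span hs fun i j => ?_
      simp [hX.rightSlice_apply, hX.counit_apply, Matrix.one_apply]
    rw [hg]
    exact (LinearMap.congr_fun h2 Λ).trans (traceIntegral_integral hΛ)
  · have h2 : (traceIntegral k H).smulRight (comul (R := k) g) =
        (traceIntegral k H).smulRight (g ⊗ₜ[k] g) := by
      refine linearMap_ext_of_span hs fun i j => ?_
      have h3 (i j) : ∑ l, traceIntegral k H (X l j) • X i l = traceIntegral k H (X i j) • g := by
        rw [← hX.rightSlice_apply, hr]
      have h4 := congrArg (comul (R := k)) (h3 i j)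
      rw [map_smul] at h4
      rw [LinearMap.smulRight_apply, ← h4, LinearMap.smulRight_apply]
      simp_rw [map_sum, map_smul, hX.comul_apply, Finset.smul_sum]
      rw [Finset.sum_comm]
      simp_rw [← TensorProduct.tmul_smul, ← TensorProduct.tmul_sum, h3]
      calc ∑ m, X i m ⊗ₜ[k] (traceIntegral k H (X m j) • g)
          = (∑ m, traceIntegral k H (X m j) • X i m) ⊗ₜ[k] g := by
            simp [TensorProduct.sum_tmul, TensorProduct.smul_tmul]
        _ = _ := by rw [h3, TensorProduct.smul_tmul]
    have := LinearMap.congr_fun h2 Λ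
    simpa [traceIntegral_integral hΛ] using this

theorem exists_groupLike_antipode_pow_four (k : Type) [Field k] [CharZero k] [IsAlgClosed k]
    (H : Type) [Ring H] [HopfAlgebra k H] [FiniteDimensional k H] [IsSemisimpleRing H] :
    ∃ g : H, IsGroupLikeElem k g ∧
      ∀ c, g * c = antipode k (antipode k (antipode k (antipode k c))) * g := by
  obtain ⟨X, hX, -, hs⟩ := exists_regular_isCorep (Module.finBasis k H)
  obtain ⟨Λ, hΛ⟩ := exists_isNormalizedIntegral (k := k) (H := H)
  obtain ⟨g, hg, hr⟩ := exists_distinguished k H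
  refine ⟨g, hg, fun c => ?_⟩
  let τ := traceIntegral k H ∘ₗ LinearMap.mulLeft k g
  have hτ (h : H) : rightSlice τ h = τ h • 1 := by
    have h1 : rightSlice (traceIntegral k H) (g * h) = g * rightSlice τ h := by
      simp only [rightSlice, LinearMap.comp_apply, Bialgebra.comul_mul, hg.comul_eq_tmul_self]
      generalize comul (R := k) h = z
      induction z with
      | zero => simp
      | add x y hx hy => simp only [mul_add, map_add, hx, hy]
      | tmul x y => simp [τ]
    rw [hr] at h1
    have h2 := congrArg (antipode k g * ·) h1
    simpa [← mul_assoc, hg.antipode_mul_cancel] using! h2.symm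
  have hρ_int : IsRightIntegral (τ ∘ₗ antipode k) := by
    have : leftSlice (τ ∘ₗ antipode k) = (τ ∘ₗ antipode k).smulRight (1 : H) := by
      refine linearMap_ext_of_span hs fun i j => (antipode_bijective k H).1 ?_
      have := hX.antipode.rightSlice_apply τ j i
      rw [hτ] at this
      simpa [hX.leftSlice_apply] using this.symm
    exact fun h => LinearMap.congr_fun this h
  have hS (x y : H) : τ (antipode k (x * y)) = τ (antipode k (antipode k (antipode k y) * x)) := by
    have := hρ_int.eq_smul hΛ
    have h (z) := LinearMap.congr_fun this z
    simp only [LinearMap.comp_apply, LinearMap.smul_apply] at h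
    rw [h (x * y), h (_ * x), traceIntegral_mul]
  rw [← sub_eq_zero]
  refine eq_zero_of_traceIntegral_mul_right (k := k) fun a => ?_
  rw [sub_mul, map_sub, sub_eq_zero]
  obtain ⟨y, rfl⟩ := (antipode_bijective k H).2 c
  obtain ⟨x, rfl⟩ := (antipode_bijective k H).2 a
  have := hS x y
  simp only [antipode_mul_antidistrib, τ, LinearMap.comp_apply, LinearMap.mulLeft_apply] at this
  rw [mul_assoc, this, ← mul_assoc, traceIntegral_mul, mul_assoc]

/-- Some positive even power of the element `S(Λ₂) Λ₁` is central. -/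
theorem exists_drinfeld_pow_commute {Λ : H} (hΛ : IsNormalizedIntegral k Λ) :
    ∃ m : ℕ, 0 < m ∧ ∀ h, Commute (drinfeld k Λ ^ m) h := by
  obtain ⟨g, hg, hc⟩ := exists_groupLike_antipode_pow_four k H
  have : Finite (GroupLike k H) := (linearIndep_groupLikeVal (R := k) (A := H)).finite
  obtain ⟨m, hm, hgm⟩ :=
    isOfFinOrder_iff_pow_eq_one.1 (isOfFinOrder_of_finite (⟨g, hg⟩ : GroupLike k H))
  have hgm : g ^ m = 1 := congrArg GroupLike.val hgm
  let F : H → H := fun c => antipode k (antipode k (antipode k (antipode k c)))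
  have h1 (n : ℕ) (h : H) : g ^ n * h = F^[n] h * g ^ n := by
    induction n with
    | zero => simp
    | succ n ih =>
      rw [pow_succ', mul_assoc, ih, ← mul_assoc, hc, Function.iterate_succ_apply', mul_assoc]
  have h2 (n : ℕ) (h : H) : drinfeld k Λ ^ (2 * n) * h = F^[n] h * drinfeld k Λ ^ (2 * n) := by
    induction n with
    | zero => simp
    | succ n ih =>
      calc drinfeld k Λ ^ (2 * (n + 1)) * h
          = drinfeld k Λ * (drinfeld k Λ * F^[n] h) * drinfeld k Λ ^ (2 * n) := by
            rw [Nat.mul_succ, Nat.add_comm, pow_add, mul_assoc, ih]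
            simp only [pow_two, mul_assoc]
        _ = F^[n + 1] h * (drinfeld k Λ ^ 2 * drinfeld k Λ ^ (2 * n)) := by
            rw [drinfeld_mul hΛ (F^[n] h), ← mul_assoc, drinfeld_mul hΛ,
              Function.iterate_succ_apply']
            simp only [F, pow_two, mul_assoc]
        _ = _ := by rw [← pow_add, show 2 + 2 * n = 2 * (n + 1) by ring]
  refine ⟨2 * m, by omega, fun h => ?_⟩
  have h3 := h1 m h
  rw [hgm, one_mul, mul_one] at h3
  rw [Commute, SemiconjBy, h2, ← h3]

end Radford

section TraceSq

open Coalgebra HopfAlgebra Polynomial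

theorem trace_inv_eq_sum_roots {k : Type*} [Field k] [IsAlgClosed k] {n : Type*} [Fintype n]
    [DecidableEq n] (u : Matrix n n k) (hu : IsUnit u) :
    (u⁻¹).trace = (u.charpoly.roots.map (·⁻¹)).sum := by
  have hrev (s : Multiset k) (hs : (0 : k) ∉ s) :
      ∃ c : k, c ≠ 0 ∧ (s.map fun a => X - C a).prod.reverse =
        C c * ((s.map (·⁻¹)).map fun a => X - C a).prod := by
    induction s using Multiset.induction_on with
    | empty => exact ⟨1, one_ne_zero, by simpa using reverse_C (1 : k)⟩
    | cons a s ih =>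
      rw [Multiset.mem_cons, not_or] at hs
      obtain ⟨c, hc, h⟩ := ih hs.2
      refine ⟨-a * c, by simp [hc, Ne.symm hs.1], ?_⟩
      have ha : a ≠ 0 := Ne.symm hs.1
      have h1 : (X - C a).reverse = C (-a) * (X - C a⁻¹) := by
        rw [mul_sub, ← C_mul, neg_mul, mul_inv_cancel₀ ha]
        have h2 := reverse_add_C (1 * X : k[X]) (-a)
        rw [reverse_mul_X, natDegree_mul_X one_ne_zero, ← C_1, reverse_C, C_1, one_mul] at h2
        simpa [sub_eq_add_neg, add_comm] using h2
      rw [Multiset.map_cons, Multiset.map_cons, Multiset.map_cons, Multiset.prod_cons,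
        Multiset.prod_cons, reverse_mul_of_domain, h, h1, C_mul]
      ring
  have h0 : (0 : k) ∉ u.charpoly.roots := fun h => by
    have h1 := Multiset.prod_eq_zero h
    rw [← Matrix.det_eq_prod_roots_charpoly] at h1
    exact ((Matrix.isUnit_iff_isUnit_det u).1 hu).ne_zero h1
  obtain ⟨c, hc, h⟩ := hrev _ h0
  rw [← (IsAlgClosed.splits u.charpoly).eq_prod_roots_of_monic u.charpoly_monic] at h
  have hdet : Ring.inverse u.det ≠ 0 := by
    rw [Ring.inverse_eq_inv']
    exact inv_ne_zero ((Matrix.isUnit_iff_isUnit_det u).1 hu).ne_zero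
  rw [Matrix.trace_eq_sum_roots_charpoly, Matrix.charpoly_inv u hu, ← Matrix.reverse_charpoly, h,
    ← mul_assoc, show ((-1 : k[X]) ^ Fintype.card n * C (Ring.inverse u.det) * C c) =
      C ((-1) ^ Fintype.card n * Ring.inverse u.det * c) by simp,
    roots_C_mul _ (mul_ne_zero (mul_ne_zero (by simp) hdet) hc), roots_multiset_prod_X_sub_C]

theorem pow_eq_of_mem_roots_charpoly {k : Type*} [Field k] {n : Type*} [Fintype n]
    [DecidableEq n] [Nonempty n] {u : Matrix n n k} {m : ℕ} {s : k}
    (hs : u ^ m = algebraMap k _ s)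
    {μ : k} (hμ : μ ∈ u.charpoly.roots) : μ ^ m = s := by
  have h1 : μ ∈ spectrum k u :=
    Matrix.mem_spectrum_of_isRoot_charpoly (isRoot_of_mem_roots hμ)
  have h2 := spectrum.pow_mem_pow u m h1
  rw [hs, spectrum.scalar_eq] at h2
  exact h2

theorem trace_mul_mul {k : Type*} [Field k] {ι : Type*} [Fintype ι] [DecidableEq ι] (d : ι → ℕ)
    (a b : ∀ i, Matrix (Fin (d i)) (Fin (d i)) k) :
    LinearMap.trace k _ (LinearMap.mulLeft k a ∘ₗ LinearMap.mulRight k b) =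
      ∑ i, (a i).trace * (b i).trace := by
  rw [LinearMap.trace_eq_matrix_trace k
    (Pi.basis fun i => Matrix.stdBasis k (Fin (d i)) (Fin (d i))),
    Matrix.trace, Fintype.sum_sigma]
  refine Finset.sum_congr rfl fun i _ => ?_
  rw [Fintype.sum_prod_type, Matrix.trace, Matrix.trace, Finset.sum_mul_sum]
  refine Finset.sum_congr rfl fun p _ => Finset.sum_congr rfl fun q _ => ?_
  have hrepr (x : Matrix (Fin (d i)) (Fin (d i)) k) :
      (Matrix.stdBasis k (Fin (d i)) (Fin (d i))).repr x (p, q) = x p q := rfl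
  simp [LinearMap.toMatrix_apply, Matrix.stdBasis_eq_single, hrepr, Matrix.mul_apply,
    Matrix.single_apply, ite_and]

variable {k : Type} [Field k] [CharZero k]

theorem sum_mul_sum_inv_pos (σ : algebraicClosure ℚ k →+* ℂ) (s : Multiset k) (m : ℕ)
    (hm : 0 < m) (c : k)
    (hc : c ≠ 0) (hs : ∀ μ ∈ s, μ ^ m = c) (h0 : s.sum ≠ 0) :
    ∃ (z : algebraicClosure ℚ k) (r : ℝ),
      (z : k) = s.sum * (s.map (·⁻¹)).sum ∧ 0 < r ∧ σ z = r := by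
  obtain ⟨ν, hν⟩ : ∃ ν, ν ∈ s := Multiset.exists_mem_of_ne_zero fun h => h0 (by simp [h])
  have hν0 : ν ≠ 0 := by
    rintro rfl
    exact hc (by rw [← hs 0 hν, zero_pow hm.ne'])
  obtain ⟨t, ht⟩ : ∃ t : Multiset (algebraicClosure ℚ k),
      t.map (algebraMap _ k) = s.map (· / ν) := by
    have hmem : ∀ a ∈ s.map (· / ν), a ∈ algebraicClosure ℚ k := by
      intro a ha
      obtain ⟨μ, hμ, rfl⟩ := Multiset.mem_map.1 ha
      have h1 : (μ / ν) ^ m = 1 := by rw [div_pow, hs _ hμ, hs _ hν, div_self hc]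
      have h2 : IsAlgebraic ℚ (μ / ν) :=
        (IsIntegral.of_pow hm (h1 ▸ isIntegral_one)).isAlgebraic
      exact mem_algebraicClosure_iff.2 h2
    lift s.map (· / ν) to Multiset (algebraicClosure ℚ k) using hmem with t ht
    exact ⟨t, rfl⟩
  have htm : ∀ η ∈ t, η ^ m = 1 := by
    intro η hη
    have h1 := Multiset.mem_map_of_mem (algebraMap _ k) hη
    rw [ht] at h1
    obtain ⟨μ, hμ, h2⟩ := Multiset.mem_map.1 h1
    apply (algebraMap (algebraicClosure ℚ k) k).injective
    rw [map_pow, ← h2, map_one, div_pow, hs _ hμ, hs _ hν, div_self hc]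
  have hsum : (t.sum : k) = s.sum / ν := by
    change algebraMap (algebraicClosure ℚ k) k t.sum = _
    rw [map_multiset_sum, ht, Multiset.sum_map_div, Multiset.map_id']
  have hsum' : ((t.map (·⁻¹)).sum : k) = (s.map (·⁻¹)).sum * ν := by
    change algebraMap (algebraicClosure ℚ k) k _ = _
    rw [map_multiset_sum, Multiset.map_map]
    have : (algebraMap (algebraicClosure ℚ k) k) ∘ (·⁻¹) =
        (·⁻¹) ∘ algebraMap (algebraicClosure ℚ k) k := by
      ext; simp
    rw [this, ← Multiset.map_map, ht, Multiset.map_map, ← Multiset.sum_map_mul_right]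
    congr 1
    refine Multiset.map_congr rfl fun μ _ => ?_
    simp [div_eq_mul_inv, mul_comm]
  have hconj : σ (t.map (·⁻¹)).sum = starRingEnd ℂ (σ t.sum) := by
    rw [map_multiset_sum, map_multiset_sum, map_multiset_sum, Multiset.map_map, Multiset.map_map]
    congr 1
    refine Multiset.map_congr rfl fun η hη => ?_
    rw [Function.comp_apply, Function.comp_apply, map_inv₀, Complex.inv_eq_conj]
    exact Complex.norm_eq_one_of_pow_eq_one (by rw [← map_pow, htm η hη, map_one]) hm.ne'
  have hne : σ t.sum ≠ 0 := by
    rw [Ne, map_eq_zero]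
    intro h
    rw [h] at hsum
    exact div_ne_zero h0 hν0 hsum.symm
  refine ⟨t.sum * (t.map (·⁻¹)).sum, Complex.normSq (σ t.sum), ?_, Complex.normSq_pos.2 hne, ?_⟩
  · change (t.sum : k) * ((t.map (·⁻¹)).sum : k) = _
    rw [hsum, hsum']
    field_simp
  · rw [map_mul, hconj, Complex.mul_conj]

theorem sum_trace_mul_trace_inv_ne_zero [IsAlgClosed k] {ι : Type*} [Fintype ι] [Nonempty ι]
    (d : ι → ℕ)
    [∀ i, NeZero (d i)] (u : ∀ i, Matrix (Fin (d i)) (Fin (d i)) k) (hu : ∀ i, IsUnit (u i))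
    (m : ℕ) (hm : 0 < m) (hs : ∀ i, ∃ s, u i ^ m = algebraMap k _ s)
    (ht : ∀ i, (u i).trace ≠ 0) : ∑ i, (u i).trace * ((u i)⁻¹).trace ≠ 0 := by
  have : Algebra.IsAlgebraic ℚ (algebraicClosure ℚ k) := by
    convert! algebraicClosure.isAlgebraic ℚ k
  let σ : algebraicClosure ℚ k →ₐ[ℚ] ℂ := IsAlgClosed.lift
  have h (i) : ∃ (z : algebraicClosure ℚ k) (r : ℝ),
      (z : k) = (u i).trace * ((u i)⁻¹).trace ∧ 0 < r ∧ σ z = r := by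
    obtain ⟨s, hs⟩ := hs i
    rw [trace_inv_eq_sum_roots _ (hu i), Matrix.trace_eq_sum_roots_charpoly]
    have : Nonempty (Fin (d i)) := ⟨⟨0, Nat.pos_of_ne_zero (NeZero.ne _)⟩⟩
    refine sum_mul_sum_inv_pos σ.toRingHom _ m hm s ?_
      (fun μ hμ => pow_eq_of_mem_roots_charpoly hs hμ) ?_
    · rintro rfl
      rw [map_zero] at hs
      exact ((hu i).pow m).ne_zero hs
    · rw [← Matrix.trace_eq_sum_roots_charpoly]
      exact ht i
  choose z r hz hr hσ using h
  intro h0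
  have h1 : (∑ i, z i) = 0 := by
    apply (algebraMap (algebraicClosure ℚ k) k).injective
    rw [map_sum, map_zero, ← h0]
    exact Finset.sum_congr rfl fun i _ => hz i
  have h2 := congrArg σ h1
  rw [map_sum, map_zero] at h2
  simp_rw [hσ] at h2
  rw [← Complex.ofReal_sum, Complex.ofReal_eq_zero] at h2
  exact (Finset.sum_pos (fun i _ => hr i) Finset.univ_nonempty).ne' h2

variable {H : Type} [Ring H] [HopfAlgebra k H] [FiniteDimensional k H]
variable [IsAlgClosed k] [IsSemisimpleRing H]

theorem trace_antipode_sq_ne_zero :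
    LinearMap.trace k H (antipode k ∘ₗ antipode k) ≠ 0 := by
  obtain ⟨Λ, hΛ⟩ := exists_isNormalizedIntegral (k := k) (H := H)
  obtain ⟨n, d, hd, ⟨W⟩⟩ := IsSemisimpleRing.exists_algEquiv_pi_matrix_of_isAlgClosed k H
  obtain ⟨m, hm, hcomm⟩ := exists_drinfeld_pow_commute hΛ
  have hu := isUnit_drinfeld hΛ
  set u := drinfeld k Λ
  have hWu (i) : IsUnit (W u i) := Pi.isUnit_iff.1 (hu.map W) i
  have hconj : W.toLinearEquiv.conj (antipode k ∘ₗ antipode k) =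
      LinearMap.mulLeft k (W u) ∘ₗ LinearMap.mulRight k (fun i => (W u i)⁻¹) := by
    refine LinearMap.ext fun x => ?_
    obtain ⟨h, rfl⟩ := W.surjective x
    have h1 := congrArg W (drinfeld_mul hΛ h)
    rw [map_mul, map_mul] at h1
    refine funext fun i => ?_
    have h2 : W u i * W h i = W (antipode k (antipode k h)) i * W u i := congrFun h1 i
    have h3 : W (antipode k (antipode k h)) i = W u i * W h i * (W u i)⁻¹ := by
      rw [h2, mul_assoc, Matrix.mul_nonsing_inv _ ((Matrix.isUnit_iff_isUnit_det _).1 (hWu i)),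
        mul_one]
    simpa [← mul_assoc] using h3
  rw [← LinearMap.trace_conj' _ W.toLinearEquiv, hconj, trace_mul_mul]
  have : Nonempty (Fin n) := by
    by_contra h
    rw [not_nonempty_iff] at h
    have : Nontrivial H := ⟨Λ, 0, fun h => by simpa [h] using hΛ.counit_eq⟩
    exact one_ne_zero (W.injective (Subsingleton.elim (W 1) (W 0)))
  refine sum_trace_mul_trace_inv_ne_zero d _ hWu m hm (fun i => ?_) fun i => ?_
  · have h (x : Matrix (Fin (d i)) (Fin (d i)) k) : Commute (W u i ^ m) x := by
      have := congrArg (fun y => W y i) (hcomm (W.symm (Pi.single i x))).eq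
      simpa [Commute, SemiconjBy] using this
    obtain ⟨s, hs⟩ := Matrix.mem_range_scalar_iff_commute_single'.2 fun i j => (h _).symm
    exact ⟨s, hs.symm⟩
  · let τ : H →ₗ[k] k := Matrix.traceLinearMap (Fin (d i)) k k ∘ₗ LinearMap.proj i ∘ₗ W.toLinearMap
    have := trace_drinfeld hΛ τ fun x y => by
      simpa [τ] using Matrix.trace_mul_comm _ _
    have h2 : τ u = (W u i).trace := rfl
    rw [← h2, this]
    simp [τ, (hd i).out]

end TraceSq

section Cosemisimple

open Coalgebra HopfAlgebra WithConv

/-- An algebra with a normalized Casimir element is semisimple. -/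
theorem isSemisimpleRing_of_casimir {k A ι : Type*} [Field k] [Ring A] [Algebra k A] [Fintype ι]
    (a b : ι → A) (c : A → ι → ι → k) (hleft : ∀ x i, x * a i = ∑ j, c x i j • a j)
    (hright : ∀ x j, ∑ i, c x i j • b i = b j * x) (hone : ∑ i, a i * b i = 1) :
    IsSemisimpleRing A := by
  refine { exists_isCompl := fun N => ?_ }
  obtain ⟨π, hπ⟩ := (N.restrictScalars k).subtype.exists_leftInverse_of_injective
    (LinearMap.ker_eq_bot.2 Subtype.val_injective)
  let q : A →ₗ[k] A := (N.restrictScalars k).subtype ∘ₗ π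
  have hqmem (z : A) : q z ∈ N := (π z).2
  have hq (z : A) (hz : z ∈ N) : q z = z :=
    congrArg Subtype.val (LinearMap.congr_fun hπ ⟨z, hz⟩)
  let p : A →ₗ[A] A :=
    { toFun := fun z => ∑ i, a i * q (b i * z)
      map_add' := fun y z => by simp only [mul_add, map_add, Finset.sum_add_distrib]
      map_smul' := fun x z => by
        have h1 (i) : x * (a i * q (b i * z)) = ∑ j, c x i j • (a j * q (b i * z)) := by
          simp only [← mul_assoc, hleft, Finset.sum_mul, smul_mul_assoc]
        have h2 (j) : a j * q (b j * (x * z)) = ∑ i, c x i j • (a j * q (b i * z)) := by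
          rw [← mul_assoc (b j), ← hright]
          simp only [Finset.sum_mul, smul_mul_assoc, map_sum, map_smul, Finset.mul_sum,
            mul_smul_comm]
        simp only [smul_eq_mul, RingHom.id_apply, Finset.mul_sum, h1, h2]
        rw [Finset.sum_comm] }
  have hp (z : A) : p z = ∑ i, a i * q (b i * z) := rfl
  refine ⟨LinearMap.ker (p.codRestrict N fun z => N.sum_mem fun i _ => N.smul_mem _ (hqmem _)),
    LinearMap.isCompl_of_proj fun z => Subtype.ext ?_⟩
  have h (i) : q (b i * z) = b i * z := hq _ (N.smul_mem _ z.2)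
  simp_rw [LinearMap.codRestrict_apply, hp, h, ← mul_assoc, ← Finset.sum_mul, hone, one_mul]

variable {k : Type} [Field k] {H : Type} [Ring H] [HopfAlgebra k H]

theorem leftSlice_antipode_mul {ι : Type*} [Fintype ι] [DecidableEq ι] {X : Matrix ι ι H}
    (hX : IsCorep k X) (ρ : H →ₗ[k] k) (x : H) (i j : ι) :
    leftSlice ρ (antipode k (X i j) * x) =
      ∑ m, antipode k (X i m) * leftSlice (ρ ∘ₗ LinearMap.mulLeft k (antipode k (X m j))) x := by
  have := hX.antipode.comul_apply j i
  simp only [Matrix.of_apply] at this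
  simp only [leftSlice, LinearMap.comp_apply, Bialgebra.comul_mul, this]
  generalize comul (R := k) x = z
  induction z with
  | zero => simp
  | add x y hx hy => simp only [mul_add, map_add, hx, hy, Finset.sum_add_distrib]
  | tmul x y => simp [Finset.sum_mul]

theorem IsRightIntegral.leftSlice_mulLeft_antipode {ρ : H →ₗ[k] k} (hρ : IsRightIntegral ρ)
    {ι : Type*} [Fintype ι] [DecidableEq ι] {X : Matrix ι ι H} (hX : IsCorep k X)
    (x : H) (i j : ι) :
    leftSlice (ρ ∘ₗ LinearMap.mulLeft k (antipode k (X i j))) x =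
      ∑ l, ρ (antipode k (X l j) * x) • X i l := by
  have h (l) : ρ (antipode k (X l j) * x) • X i l =
      ∑ m, (X i l * antipode k (X l m)) *
        leftSlice (ρ ∘ₗ LinearMap.mulLeft k (antipode k (X m j))) x := by
    have := hρ (antipode k (X l j) * x)
    rw [leftSlice_antipode_mul hX] at this
    rw [← mul_one (X i l), ← mul_smul_comm, ← this, Finset.mul_sum]
    simp [mul_assoc]
  simp_rw [h]
  rw [Finset.sum_comm]
  simp_rw [← Finset.sum_mul, hX.sum_mul_antipode, Matrix.one_apply]
  simp

theorem convMul_apply_eq_leftSlice (f g : WithConv (H →ₗ[k] k)) (h : H) :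
    (f * g) h = g (leftSlice f.ofConv h) := by
  simp only [LinearMap.convMul_apply, leftSlice, LinearMap.comp_apply]
  generalize comul (R := k) h = z
  induction z with
  | zero => simp
  | add x y hx hy => simp only [map_add, hx, hy]
  | tmul x y => simp

theorem IsCorep.convMul_apply {ι : Type*} [Fintype ι] [DecidableEq ι] {X : Matrix ι ι H}
    (hX : IsCorep k X) (f g : WithConv (H →ₗ[k] k)) (i j : ι) :
    (f * g) (X i j) = ∑ l, f (X i l) * g (X l j) := by
  rw [convMul_apply_eq_leftSlice, hX.leftSlice_apply]
  simp

theorem tensor_ext_of_dual [FiniteDimensional k H] {z w : H ⊗[k] H}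
    (h : ∀ f g : H →ₗ[k] k, LinearMap.mul' k k (TensorProduct.map f g z) =
      LinearMap.mul' k k (TensorProduct.map f g w)) : z = w := by
  let e := Module.finBasis k H
  have key (z : H ⊗[k] H) (i j) : (e.tensorProduct e).repr z (i, j) =
      LinearMap.mul' k k (TensorProduct.map (e.coord i) (e.coord j) z) := by
    induction z with
    | zero => simp
    | add x y hx hy => simp only [map_add, Finsupp.add_apply, hx, hy]
    | tmul x y => simp [mul_comm]
  exact (e.tensorProduct e).ext_elem fun p => by rw [key, key, h]

variable [FiniteDimensional k H] [CharZero k] [IsAlgClosed k] [IsSemisimpleRing H]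

/-- The dual of a semisimple Hopf algebra in characteristic zero is semisimple. -/
theorem isSemisimpleRing_dual : IsSemisimpleRing (WithConv (H →ₗ[k] k)) := by
  let e := Module.finBasis k H
  obtain ⟨X, hX, -, hs⟩ := exists_regular_isCorep e
  set ρ := traceIntegral k H with hρd
  have hρ : IsRightIntegral ρ := isRightIntegral_traceIntegral
  have hρ1 : ρ 1 ≠ 0 := by
    rw [hρd, traceIntegral_one]; exact trace_antipode_sq_ne_zero
  let B : H →ₗ[k] (H →ₗ[k] k) := (ρ 1)⁻¹ • (LinearMap.llcomp k H H k ρ) ∘ₗ (LinearMap.mul k H) ∘ₗ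
    antipode k
  have hB (y z : H) : B y z = (ρ 1)⁻¹ * ρ (antipode k y * z) := by simp [B]
  have hBs (y : H) : B y = (ρ 1)⁻¹ • (ρ ∘ₗ LinearMap.mulLeft k (antipode k y)) := by
    ext z; simp [B]
  have hslice (r : k) (f : H →ₗ[k] k) (z : H) : leftSlice (r • f) z = r • leftSlice f z := by
    simp [leftSlice, LinearMap.rTensor_smul]
  have key (x : H →ₗ[k] k) (y z : H) : B (leftSlice x y) z = x (leftSlice (B y) z) := by
    let T : (H →ₗ[k] k) →ₗ[k] H :=
      { toFun := fun f => leftSlice f z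
        map_add' := fun f g => by simp [leftSlice, LinearMap.rTensor_add]
        map_smul' := fun r f => hslice r f z }
    have : B.flip z ∘ₗ leftSlice x = x ∘ₗ T ∘ₗ B := by
      refine linearMap_ext_of_span hs fun i j => ?_
      change B (leftSlice x (X i j)) z = x (leftSlice (B (X i j)) z)
      rw [hBs (X i j), hslice, hρ.leftSlice_mulLeft_antipode hX, hX.leftSlice_apply]
      simp only [map_sum, map_smul, LinearMap.sum_apply, LinearMap.smul_apply, hB, smul_eq_mul,
        Finset.mul_sum]
      exact Finset.sum_congr rfl fun l _ => by ring
    exact LinearMap.congr_fun this y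
  refine isSemisimpleRing_of_casimir (k := k) (fun i => toConv (e.coord i))
    (fun i => toConv (B (e i))) (fun x i j => (x * toConv (e.coord i)) (e j)) ?_ ?_ ?_
  · intro x i
    apply WithConv.ofConv_injective
    refine e.ext fun j => ?_
    simp [LinearMap.sum_apply, Finsupp.single_apply]
  · intro x j
    apply WithConv.ofConv_injective
    ext z
    have h1 : (toConv (B (e j)) * x) z = B (leftSlice x.ofConv (e j)) z := by
      rw [convMul_apply_eq_leftSlice, key]
    change _ = (toConv (B (e j)) * x) z
    rw [h1]
    conv_rhs => rw [← e.sum_repr (leftSlice x.ofConv (e j))]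
    simp_rw [convMul_apply_eq_leftSlice]
    simp only [map_sum, map_smul, LinearMap.sum_apply, LinearMap.smul_apply, ofConv_sum,
      ofConv_smul, Module.Basis.coord_apply]
  · apply WithConv.ofConv_injective
    refine linearMap_ext_of_span hs fun i j => ?_
    have h1 : (∑ i, toConv (e.coord i) * toConv (B (e i)) : WithConv (H →ₗ[k] k)) (X i j) =
        ∑ l, B (X i l) (X l j) := by
      have : (∑ i, toConv (e.coord i) * toConv (B (e i)) : WithConv (H →ₗ[k] k)) (X i j) =
          ∑ m, (toConv (e.coord m) * toConv (B (e m)) : WithConv (H →ₗ[k] k)) (X i j) := by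
        simp [LinearMap.sum_apply]
      rw [this]
      simp_rw [hX.convMul_apply]
      rw [Finset.sum_comm]
      refine Finset.sum_congr rfl fun l _ => ?_
      conv_rhs => rw [← e.sum_repr (X i l)]
      simp only [map_sum, map_smul, LinearMap.sum_apply, LinearMap.smul_apply,
        Module.Basis.coord_apply, smul_eq_mul]
    refine h1.trans ?_
    simp_rw [hB, ← Finset.mul_sum, ← map_sum, hX.sum_antipode_mul]
    change _ = (1 : WithConv (H →ₗ[k] k)) (X i j)
    rw [LinearMap.convOne_apply, hX.counit_apply, Matrix.one_apply, Matrix.one_apply]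
    split_ifs <;> simp [hρ1]

/-- A semisimple Hopf algebra has a basis of matrix coefficients of corepresentations. -/
theorem exists_isCorep_basis : ∃ (n : ℕ) (d : Fin n → ℕ) (_ : ∀ i, NeZero (d i))
    (x : ∀ i, Matrix (Fin (d i)) (Fin (d i)) H)
    (b : Module.Basis (Σ i, Fin (d i) × Fin (d i)) k H),
    (∀ i, IsCorep k (x i)) ∧ ∀ i j l, b ⟨i, (j, l)⟩ = x i j l := by
  have := isSemisimpleRing_dual (k := k) (H := H)
  have : FiniteDimensional k (WithConv (H →ₗ[k] k)) :=
    Module.Finite.equiv (WithConv.linearEquiv k (H →ₗ[k] k)).symm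
  obtain ⟨n, d, hd, ⟨W⟩⟩ :=
    IsSemisimpleRing.exists_algEquiv_pi_matrix_of_isAlgClosed k (WithConv (H →ₗ[k] k))
  let ev (i) (j l : Fin (d i)) : Module.Dual k (Module.Dual k H) :=
    { toFun := fun f => W (toConv f) i j l
      map_add' := fun f g => by
        rw [WithConv.toConv_add, map_add]; rfl
      map_smul' := fun r f => by
        rw [WithConv.toConv_smul, map_smul]; rfl }
  let x (i) : Matrix (Fin (d i)) (Fin (d i)) H :=
    Matrix.of fun j l => (Module.evalEquiv k H).symm (ev i j l)
  have hx (i j l) (f : H →ₗ[k] k) : f (x i j l) = W (toConv f) i j l :=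
    Module.apply_evalEquiv_symm_apply k H f (ev i j l)
  have hli : LinearIndependent k fun p : Σ i, Fin (d i) × Fin (d i) => x p.1 p.2.1 p.2.2 := by
    refine LinearIndependent.of_pairwise_dual_eq_zero_one _
      (fun p => (W.symm (Pi.single p.1 (Matrix.single p.2.1 p.2.2 1))).ofConv) ?_ ?_
    · rintro ⟨i, j, l⟩ ⟨i', j', l'⟩ hne
      rw [hx, WithConv.toConv_ofConv, AlgEquiv.apply_symm_apply]
      by_cases h : i' = i
      · subst h
        rw [Pi.single_eq_same]
        refine Matrix.single_apply_of_ne _ _ _ _ _ ?_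
        rintro ⟨rfl, rfl⟩
        exact hne rfl
      · rw [Pi.single_eq_of_ne h]; rfl
    · rintro ⟨i, j, l⟩
      rw [hx, WithConv.toConv_ofConv, AlgEquiv.apply_symm_apply, Pi.single_eq_same,
        Matrix.single_apply_same]
  have hspan : ⊤ ≤ Submodule.span k
      (Set.range fun p : Σ i, Fin (d i) × Fin (d i) => x p.1 p.2.1 p.2.2) := by
    by_contra hlt
    obtain ⟨f, hf0, hf⟩ := Submodule.exists_le_ker_of_lt_top _ (lt_top_iff_not_top_le.2 hlt)
    refine hf0 (WithConv.toConv_injective (W.injective ?_))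
    rw [WithConv.toConv_zero, map_zero]
    ext i j l
    rw [← hx]
    exact hf (Submodule.subset_span ⟨⟨i, j, l⟩, rfl⟩)
  refine ⟨n, d, hd, x, Module.Basis.mk hli hspan, fun i => ⟨fun j l => ?_, fun j l => ?_⟩,
    fun i j l => Module.Basis.mk_apply _ _ _⟩
  · refine tensor_ext_of_dual fun f g => ?_
    have h := hx i j l (toConv f * toConv g).ofConv
    rw [WithConv.toConv_ofConv, map_mul, Pi.mul_apply, Matrix.mul_apply] at h
    rw [LinearMap.convMul_apply] at h
    rw [h]
    simp [hx]
  · have h := hx i j l (1 : WithConv (H →ₗ[k] k)).ofConv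
    rw [WithConv.toConv_ofConv, map_one, LinearMap.convOne_apply] at h
    simpa using h

end Cosemisimple

section Fusion

open Coalgebra HopfAlgebra

/-- A nonnegative matrix with positive left and right eigenvectors identifies the entries of any
further eigenvector, up to scale, along its nonzero entries. -/
theorem mul_eq_mul_of_eigenvector {ι : Type*} [Fintype ι] {n w : ι → ℚ} {N : ι → ι → ℚ} {m : ℚ}
    (hn : ∀ a, 0 < n a) (hN : ∀ a g, 0 ≤ N a g) (hrow : ∀ a, ∑ g, N a g * n g = m * n a)
    (hcol : ∀ g, ∑ a, n a * N a g = m * n g) (hw : ∀ a, ∑ g, N a g * w g = m * w a)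
    {a g : ι} (hag : N a g ≠ 0) : n a * w g = n g * w a := by
  let u (a) := w a / n a
  have hu (a) : w a = n a * u a := by
    have := (hn a).ne'
    simp only [u]; field_simp
  have hsum : ∑ a, ∑ g, n a * N a g * n g * (u g - u a) ^ 2 = 0 := by
    have h1 : ∑ a, ∑ g, n a * N a g * n g * (u g - u a) ^ 2 =
        ∑ g, (∑ a, n a * N a g) * (n g * u g ^ 2) + ∑ a, (∑ g, N a g * n g) * (n a * u a ^ 2) -
          2 * ∑ a, (∑ g, N a g * w g) * (n a * u a) := by
      simp_rw [Finset.sum_mul, Finset.mul_sum]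
      rw [Finset.sum_comm (f := fun g a => n a * N a g * (n g * u g ^ 2))]
      rw [← Finset.sum_add_distrib, ← Finset.sum_sub_distrib]
      refine Finset.sum_congr rfl fun a _ => ?_
      rw [← Finset.sum_add_distrib, ← Finset.sum_sub_distrib]
      refine Finset.sum_congr rfl fun g _ => ?_
      rw [hu g]; ring
    rw [h1]
    simp_rw [hrow, hcol, hw, Finset.mul_sum]
    rw [← Finset.sum_add_distrib, ← Finset.sum_sub_distrib]
    refine Finset.sum_eq_zero fun a _ => ?_
    rw [hu a]; ring
  have hnonneg (a g) : 0 ≤ n a * N a g * n g * (u g - u a) ^ 2 :=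
    mul_nonneg (mul_nonneg (mul_nonneg (hn a).le (hN a g)) (hn g).le) (sq_nonneg _)
  have h2 := (Finset.sum_eq_zero_iff_of_nonneg fun a _ =>
    Finset.sum_nonneg fun g _ => hnonneg a g).1 hsum a (Finset.mem_univ a)
  have h3 := (Finset.sum_eq_zero_iff_of_nonneg fun g _ => hnonneg a g).1 h2 g (Finset.mem_univ g)
  have h4 : u g - u a = 0 := by
    simpa [(hn a).ne', (hn g).ne', hag] using h3
  rw [hu a, hu g, sub_eq_zero.1 h4]; ring

variable {k : Type} [Field k] {H : Type} [Ring H] [HopfAlgebra k H]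

theorem trace_map_algebraMap_mul {ι : Type*} [Fintype ι] (A : Matrix ι ι k) (B : Matrix ι ι H) :
    (A.map (algebraMap k H) * B).trace = (B * A.map (algebraMap k H)).trace := by
  simp only [Matrix.trace, Matrix.diag_apply, Matrix.mul_apply, Matrix.map_apply]
  rw [Finset.sum_comm]
  exact Finset.sum_congr rfl fun i _ => Finset.sum_congr rfl fun j _ => Algebra.commutes _ _

/-- The regular character absorbs every character. -/
theorem trace_regular_mul_trace (hS : Function.Bijective (antipode k : H →ₗ[k] H))
    {ι κ : Type*} [Fintype ι] [DecidableEq ι] [Fintype κ] [DecidableEq κ]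
    (e : Module.Basis ι k H) {X : Matrix ι ι H}
    (hX : ∀ j, comul (R := k) (e j) = ∑ i, e i ⊗ₜ[k] X i j)
    {Y : Matrix κ κ H} (hY : IsCorep k Y) :
    X.trace * Y.trace = (Fintype.card κ : k) • X.trace := by
  choose z hz using hS.2
  have hyz (l i) : ∑ m, Y m l * z (Y i m) = (1 : Matrix κ κ H) i l := by
    apply hS.1
    simp only [map_sum, antipode_mul_antidistrib, hz, hY.sum_mul_antipode, Matrix.one_apply]
    split_ifs <;> simp
  let R (h : H) : Matrix ι ι k := LinearMap.toMatrix e e (LinearMap.mulRight k h)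
  have hRe (h : H) (p) : e p * h = ∑ q, R h q p • e q := by
    simp only [R, LinearMap.toMatrix_apply, LinearMap.mulRight_apply, e.sum_repr]
  have hRmul (g h : H) : R h * R g = R (g * h) := by
    simp only [R, ← LinearMap.toMatrix_comp, LinearMap.mulRight_mul]
  have hRsum (f : κ → H) : ∑ l, R (f l) = R (∑ l, f l) := by
    simp only [R, ← map_sum]
    congr 1
    ext h; simp [LinearMap.sum_apply, Finset.mul_sum]
  have hRone (i l : κ) : R ((1 : Matrix κ κ H) i l) = if i = l then 1 else 0 := by
    rw [Matrix.one_apply]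
    split_ifs <;> simp [R]
  let U : Matrix (ι × κ) (ι × κ) k := Matrix.of fun p q => R (Y p.2 q.2) p.1 q.1
  let W : Matrix (ι × κ) (ι × κ) k := Matrix.of fun p q => R (z (Y p.2 q.2)) p.1 q.1
  let Z : Matrix (ι × κ) (ι × κ) H := Matrix.of fun p q => X p.1 q.1 * Y p.2 q.2
  let Z' : Matrix (ι × κ) (ι × κ) H := Matrix.of fun p q => if p.2 = q.2 then X p.1 q.1 else 0
  have hWU : W * U = 1 := by
    ext ⟨s, i⟩ ⟨q, l⟩
    have h := congrFun (congrFun ((hRsum fun m => Y m l * z (Y i m)).trans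
      (by rw [hyz, hRone])) s) q
    rw [Matrix.sum_apply] at h
    simp only [← hRmul, Matrix.mul_apply] at h
    rw [Matrix.mul_apply, Fintype.sum_prod_type_right]
    refine Eq.trans h ?_
    rw [Matrix.one_apply]
    split_ifs with h1 h2 h2 <;> simp_all [Matrix.one_apply]
  have hUW : U * W = 1 := mul_eq_one_comm.1 hWU
  have hUZ : U.map (algebraMap k H) * Z = Z' * U.map (algebraMap k H) := by
    ext ⟨r, m⟩ ⟨p, j⟩
    have h1 : leftSlice (e.coord r) (e p * Y m j) =
        ∑ q, ∑ l, R (Y m l) r q • (X q p * Y l j) := by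
      simp only [leftSlice, LinearMap.comp_apply, Bialgebra.comul_mul, hX, hY.comul_apply,
        Finset.sum_mul_sum, Algebra.TensorProduct.tmul_mul_tmul, map_sum, LinearMap.rTensor_tmul,
        LinearEquiv.coe_coe, TensorProduct.lid_tmul]
      simp [R, LinearMap.toMatrix_apply]
    have h2 : leftSlice (e.coord r) (e p * Y m j) = ∑ q, R (Y m j) q p • X r q := by
      rw [hRe, map_sum]
      refine Finset.sum_congr rfl fun q _ => ?_
      rw [map_smul]
      simp [leftSlice, hX, Finsupp.single_apply, ite_smul]
    simp only [Matrix.mul_apply, Fintype.sum_prod_type, U, Z, Z', Matrix.map_apply,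
      Matrix.of_apply, ← Algebra.smul_def, ← h1, h2, smul_ite, smul_zero, Finset.sum_ite_eq,
      Finset.mem_univ, if_true, ← Algebra.commutes (R := k)]
  have hmap (A B : Matrix (ι × κ) (ι × κ) k) (h : A * B = 1) :
      A.map (algebraMap k H) * B.map (algebraMap k H) = 1 := by
    rw [← Matrix.map_mul, h]
    simp
  have htr : Z.trace = Z'.trace := by
    rw [← one_mul Z, ← hmap W U hWU, mul_assoc, hUZ, trace_map_algebraMap_mul, mul_assoc,
      hmap U W hUW, mul_one]
  have h1 : Z.trace = X.trace * Y.trace := by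
    simp [Matrix.trace, Z, Fintype.sum_prod_type, Finset.sum_mul_sum]
  have h2 : Z'.trace = (Fintype.card κ : k) • X.trace := by
    simp [Matrix.trace, Z', Fintype.sum_prod_type, Finset.smul_sum, Nat.cast_smul_eq_nsmul]
  rw [← h1, htr, h2]

end Fusion

section CorepBasis

open Coalgebra HopfAlgebra

variable {k : Type} [Field k] {H : Type} [Ring H] [HopfAlgebra k H]
  {ι : Type} {d : ι → ℕ}

/-- A basis of `H` consisting of the matrix coefficients of corepresentations `x i`. -/
structure IsCorepBasis (x : ∀ i, Matrix (Fin (d i)) (Fin (d i)) H)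
    (b : Module.Basis (Σ i, Fin (d i) × Fin (d i)) k H) : Prop where
  isCorep : ∀ i, IsCorep k (x i)
  basis_apply : ∀ i j l, b ⟨i, (j, l)⟩ = x i j l

variable {x : ∀ i, Matrix (Fin (d i)) (Fin (d i)) H}
  {b : Module.Basis (Σ i, Fin (d i) × Fin (d i)) k H}

/-- The span of the matrix coefficients of `X`. -/
def coeffSpan (k : Type) [Field k] {H : Type} [Ring H] [HopfAlgebra k H] {κ : Type*}
    (X : Matrix κ κ H) : Submodule k H :=
  Submodule.span k (Set.range fun p : κ × κ => X p.1 p.2)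

theorem coeffSpan_le {κ : Type*} {X : Matrix κ κ H} {C : Submodule k H} :
    coeffSpan k X ≤ C ↔ ∀ i j, X i j ∈ C := by
  rw [coeffSpan, Submodule.span_le, Set.range_subset_iff, Prod.forall]
  rfl

theorem mem_coeffSpan {κ : Type*} (X : Matrix κ κ H) (i j : κ) : X i j ∈ coeffSpan k X :=
  coeffSpan_le.1 le_rfl i j

theorem trace_mem_coeffSpan {κ : Type*} [Fintype κ] (X : Matrix κ κ H) :
    X.trace ∈ coeffSpan k X :=
  Submodule.sum_mem _ fun i _ => mem_coeffSpan X i i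

theorem coeffSpan_mul {κ κ' : Type*} (X : Matrix κ κ H) (Y : Matrix κ' κ' H) :
    coeffSpan k X * coeffSpan k Y =
      coeffSpan k (Matrix.of fun p q : κ × κ' => X p.1 q.1 * Y p.2 q.2) := by
  apply le_antisymm
  · rw [coeffSpan, coeffSpan, Submodule.span_mul_span, Submodule.span_le]
    rintro _ ⟨_, ⟨p, rfl⟩, _, ⟨q, rfl⟩, rfl⟩
    exact mem_coeffSpan (k := k) (Matrix.of fun p q : κ × κ' => X p.1 q.1 * Y p.2 q.2)
      (p.1, q.1) (p.2, q.2)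
  · exact coeffSpan_le.2 fun p q =>
      Submodule.mul_mem_mul (mem_coeffSpan _ _ _) (mem_coeffSpan _ _ _)

theorem IsCorep.counit_trace {κ : Type*} [Fintype κ] [DecidableEq κ] {X : Matrix κ κ H}
    (hX : IsCorep k X) : counit (R := k) X.trace = (Fintype.card κ : k) := by
  simp [Matrix.trace, hX.counit_apply]

theorem IsCorep.comm_comul_trace {κ : Type*} [Fintype κ] [DecidableEq κ] {X : Matrix κ κ H}
    (hX : IsCorep k X) :
    TensorProduct.comm k H H (comul (R := k) X.trace) = comul (R := k) X.trace := by
  simp only [Matrix.trace, Matrix.diag_apply, map_sum, hX.comul_apply, TensorProduct.comm_tmul]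
  exact Finset.sum_comm

theorem rightSlice_eq_leftSlice_comm (f : H →ₗ[k] k) (z : H)
    (hz : TensorProduct.comm k H H (comul (R := k) z) = comul (R := k) z) :
    rightSlice f z = leftSlice f z := by
  rw [leftSlice, LinearMap.comp_apply, LinearMap.comp_apply, ← hz, rightSlice,
    LinearMap.comp_apply, LinearMap.comp_apply]
  generalize comul (R := k) z = w
  induction w with
  | zero => simp
  | add x y hx hy => simp only [map_add, hx, hy]
  | tmul x y => simp

namespace IsCorepBasis

variable (hb : IsCorepBasis x b)

include hb

variable [DecidableEq ι]

theorem coord_apply (i j l i' j' l') : b.coord ⟨i, (j, l)⟩ (x i' j' l') =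
    if (⟨i', (j', l')⟩ : Σ i, Fin (d i) × Fin (d i)) = ⟨i, (j, l)⟩ then 1 else 0 := by
  rw [← hb.basis_apply, b.coord_apply, b.repr_self, Finsupp.single_apply]

omit [DecidableEq ι] in
theorem linearMap_ext {M : Type*} [AddCommGroup M] [Module k M] {f g : H →ₗ[k] M}
    (h : ∀ i j l, f (x i j l) = g (x i j l)) : f = g :=
  b.ext fun ⟨i, j, l⟩ => by rw [hb.basis_apply, h]

theorem leftSlice_coord (i r s i' j l) : leftSlice (b.coord ⟨i, (r, s)⟩) (x i' j l) =
    if h : i' = i then (if h ▸ j = r then x i s (h ▸ l) else 0) else 0 := by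
  rw [(hb.isCorep i').leftSlice_apply]
  simp_rw [hb.coord_apply]
  split_ifs with h h'
  · subst h; subst h'; simp
  · subst h; simp_all
  · simp [h]

theorem rightSlice_coord (i r s i' j l) : rightSlice (b.coord ⟨i, (r, s)⟩) (x i' j l) =
    if h : i' = i then (if h ▸ l = s then x i (h ▸ j) r else 0) else 0 := by
  rw [(hb.isCorep i').rightSlice_apply]
  simp_rw [hb.coord_apply]
  split_ifs with h h'
  · subst h; subst h'; simp
  · subst h; simp_all
  · simp [h]

theorem rightSlice_leftSlice_coord (i r s t u) (z : H) :
    rightSlice (b.coord ⟨i, (t, u)⟩) (leftSlice (b.coord ⟨i, (r, s)⟩) z) =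
      b.coord ⟨i, (r, u)⟩ z • x i s t := by
  have : rightSlice (b.coord ⟨i, (t, u)⟩) ∘ₗ leftSlice (b.coord ⟨i, (r, s)⟩) =
      (b.coord ⟨i, (r, u)⟩).smulRight (x i s t) := by
    refine hb.linearMap_ext fun i' j l => ?_
    rw [LinearMap.comp_apply, hb.leftSlice_coord, LinearMap.smulRight_apply, hb.coord_apply]
    by_cases h : i' = i
    · subst h
      by_cases h1 : j = r
      · subst h1
        by_cases h2 : l = u
        · subst h2; simp [hb.rightSlice_coord]
        · simp [hb.rightSlice_coord, h2]
      · simp [h1]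
    · simp [h]
  exact LinearMap.congr_fun this z

theorem coord_leftSlice (i r s t) (z : H) :
    b.coord ⟨i, (s, t)⟩ (leftSlice (b.coord ⟨i, (r, s)⟩) z) = b.coord ⟨i, (r, t)⟩ z := by
  have : b.coord ⟨i, (s, t)⟩ ∘ₗ leftSlice (b.coord ⟨i, (r, s)⟩) = b.coord ⟨i, (r, t)⟩ := by
    refine hb.linearMap_ext fun i' j l => ?_
    rw [LinearMap.comp_apply, hb.leftSlice_coord, hb.coord_apply]
    by_cases h : i' = i
    · subst h
      by_cases h1 : j = r
      · subst h1; simp [hb.coord_apply]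
      · simp [h1]
    · simp [h]
  exact LinearMap.congr_fun this z

theorem coord_rightSlice (i r s t) (z : H) :
    b.coord ⟨i, (s, t)⟩ (rightSlice (b.coord ⟨i, (r, s)⟩) z) =
      if r = t then b.coord ⟨i, (s, s)⟩ z else 0 := by
  have : b.coord ⟨i, (s, t)⟩ ∘ₗ rightSlice (b.coord ⟨i, (r, s)⟩) =
      if r = t then b.coord ⟨i, (s, s)⟩ else 0 := by
    refine hb.linearMap_ext fun i' j l => ?_
    rw [LinearMap.comp_apply, hb.rightSlice_coord]
    by_cases h : i' = i
    · subst h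
      by_cases h1 : l = s
      · subst h1; split_ifs <;> simp_all [hb.coord_apply]
      · split_ifs <;> simp_all [hb.coord_apply]
    · split_ifs <;> simp_all [hb.coord_apply]
  rw [← LinearMap.comp_apply, this]
  split_ifs <;> rfl

theorem coord_of_comm_comul {z : H}
    (hz : TensorProduct.comm k H H (comul (R := k) z) = comul (R := k) z) (i r s t) :
    b.coord ⟨i, (r, t)⟩ z = if r = t then b.coord ⟨i, (s, s)⟩ z else 0 := by
  rw [← hb.coord_leftSlice i r s t, ← rightSlice_eq_leftSlice_comm _ _ hz, hb.coord_rightSlice]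

variable [∀ i, NeZero (d i)]

theorem coord_trace (g i) : b.coord ⟨g, (0, 0)⟩ (x i).trace = if i = g then 1 else 0 := by
  rw [Matrix.trace, map_sum]
  simp_rw [Matrix.diag_apply, hb.coord_apply]
  by_cases h : i = g
  · subst h; simp
  · simp [h]

omit [∀ i, NeZero (d i)] in
theorem coord_of_mem {i g} (h : i ≠ g) {z : H} (hz : z ∈ coeffSpan k (x i)) (j l) :
    b.coord ⟨g, (j, l)⟩ z = 0 := by
  have : coeffSpan k (x i) ≤ LinearMap.ker (b.coord ⟨g, (j, l)⟩) :=
    coeffSpan_le.2 fun p q => by simp [hb.coord_apply, h]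
  exact this hz

omit [DecidableEq ι] in
theorem coeffSpan_ne_bot (i) : coeffSpan k (x i) ≠ ⊥ := by
  intro h
  have h1 : x i 0 0 = 0 := by simpa [h] using mem_coeffSpan (k := k) (x i) 0 0
  exact b.ne_zero ⟨i, (0, 0)⟩ (by rw [hb.basis_apply, h1])

omit [DecidableEq ι] [∀ i, NeZero (d i)] in
theorem finrank_coeffSpan (i) : Module.finrank k (coeffSpan k (x i)) = d i ^ 2 := by
  have hli : LinearIndependent k fun p : Fin (d i) × Fin (d i) => x i p.1 p.2 := by
    have := b.linearIndependent.comp (Sigma.mk i) sigma_mk_injective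
    have he : (fun p : Fin (d i) × Fin (d i) => x i p.1 p.2) = b ∘ Sigma.mk i :=
      funext fun p => (hb.basis_apply i p.1 p.2).symm
    rwa [he]
  rw [coeffSpan, finrank_span_eq_card hli]
  simp [sq]

variable [Fintype ι]

omit [DecidableEq ι] [∀ i, NeZero (d i)] in
theorem eq_sum_coord (z : H) : z = ∑ i, ∑ j, ∑ l, b.coord ⟨i, (j, l)⟩ z • x i j l := by
  conv_lhs => rw [← b.sum_repr z]
  simp [Fintype.sum_sigma, Fintype.sum_prod_type, hb.basis_apply]

theorem eq_sum_trace_of_comm_comul {z : H}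
    (hz : TensorProduct.comm k H H (comul (R := k) z) = comul (R := k) z) :
    z = ∑ i, b.coord ⟨i, (0, 0)⟩ z • (x i).trace := by
  conv_lhs => rw [hb.eq_sum_coord z]
  refine Finset.sum_congr rfl fun i _ => ?_
  have h (j l) : b.coord ⟨i, (j, l)⟩ z • x i j l =
      if j = l then b.coord ⟨i, (0, 0)⟩ z • x i j l else 0 := by
    rw [hb.coord_of_comm_comul hz i j 0 l, ite_smul, zero_smul]
  simp only [h, Matrix.trace, Finset.smul_sum, Matrix.diag_apply, Finset.sum_ite_eq,
    Finset.mem_univ, if_true]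

theorem eq_smul_trace_of_mem {i} {z : H} (hz : z ∈ coeffSpan k (x i))
    (hc : TensorProduct.comm k H H (comul (R := k) z) = comul (R := k) z) :
    ∃ r : k, z = r • (x i).trace := by
  refine ⟨b.coord ⟨i, (0, 0)⟩ z, ?_⟩
  conv_lhs => rw [hb.eq_sum_trace_of_comm_comul hc]
  exact Finset.sum_eq_single_of_mem i (Finset.mem_univ i) fun g _ hg => by
    rw [hb.coord_of_mem hg.symm hz, zero_smul]

theorem trace_mul_trace (a e) : (x a).trace * (x e).trace =
    ∑ g, b.coord ⟨g, (0, 0)⟩ ((x a).trace * (x e).trace) • (x g).trace := by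
  have h := ((hb.isCorep a).mul (hb.isCorep e)).comm_comul_trace
  have h1 : (Matrix.of fun p q : Fin (d a) × Fin (d e) => x a p.1 q.1 * x e p.2 q.2).trace =
      (x a).trace * (x e).trace := by
    simp [Matrix.trace, Fintype.sum_prod_type, Finset.sum_mul_sum]
  rw [h1] at h
  exact hb.eq_sum_trace_of_comm_comul h

omit [Fintype ι] in
theorem exists_natCast_coord_trace [CharZero k] {κ : Type*} [Fintype κ] [DecidableEq κ]
    {Y : Matrix κ κ H} (hY : IsCorep k Y) (g) :
    ∃ N : ℕ, b.coord ⟨g, (0, 0)⟩ Y.trace = N ∧ (N = 0 → ¬ coeffSpan k (x g) ≤ coeffSpan k Y) := by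
  let P := b.coord ⟨g, (0, 0)⟩
  let M : Matrix κ κ k := Y.map P
  have hPP (h : H) : P (leftSlice P h) = P h := hb.coord_leftSlice g 0 0 0 h
  have hM : IsIdempotentElem M := by
    ext i j
    have := hPP (Y i j)
    rw [hY.leftSlice_apply, map_sum] at this
    simpa [M, Matrix.mul_apply] using this
  have htr : P Y.trace = M.trace := by simp [Matrix.trace, M]
  have hT : IsIdempotentElem (Matrix.toLin' M) := by
    rw [IsIdempotentElem, Module.End.mul_eq_comp, ← Matrix.toLin'_mul, hM.eq]
  have htr' : P Y.trace = LinearMap.trace k _ (Matrix.toLin' M) := by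
    rw [htr, Matrix.trace_toLin'_eq]
  refine ⟨_, htr'.trans (LinearMap.IsIdempotentElem.isProj_range _ hT).trace, fun h0 hle => ?_⟩
  have hT0 : Matrix.toLin' M = 0 := by
    rw [← LinearMap.IsIdempotentElem.trace_eq_zero_iff hT,
      (LinearMap.IsIdempotentElem.isProj_range _ hT).trace, h0, Nat.cast_zero]
  have hM0 : M = 0 := by simpa using hT0
  have hker : coeffSpan k Y ≤ LinearMap.ker P :=
    coeffSpan_le.2 fun i j => congrFun (congrFun hM0 i) j
  have h1 : P (x g 0 0) = 0 := hker (hle (mem_coeffSpan _ _ _))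
  simp [P, hb.coord_apply] at h1

omit [∀ i, NeZero (d i)] in
theorem trace_regular {X : Matrix (Σ i, Fin (d i) × Fin (d i)) (Σ i, Fin (d i) × Fin (d i)) H}
    (hX : ∀ j, comul (R := k) (b j) = ∑ i, b i ⊗ₜ[k] X i j) :
    X.trace = ∑ a, (d a : k) • (x a).trace := by
  have h (p q) : X p q = leftSlice (b.coord p) (b q) := by
    simp [leftSlice, hX, Finsupp.single_apply, ite_smul]
  simp only [Matrix.trace, Matrix.diag_apply, h, Fintype.sum_sigma, Fintype.sum_prod_type,
    hb.basis_apply, hb.leftSlice_coord]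
  simp [Finset.smul_sum, Nat.cast_smul_eq_nsmul]

/-- If `χₑ v = ε(χₑ) v` then `χ_a v` and `χ_g v` are proportional for each constituent `χ_g` of
`χ_a χₑ`. -/
theorem smul_trace_mul_eq [CharZero k] (hS : Function.Bijective (antipode k : H →ₗ[k] H))
    {a e g : ι} {v : H} (hv : (x e).trace * v = (d e : k) • v)
    (hle : coeffSpan k (x g) ≤ coeffSpan k (x a) * coeffSpan k (x e)) :
    (d a : k) • ((x g).trace * v) = (d g : k) • ((x a).trace * v) := by
  have hN (a g) : ∃ N : ℕ, b.coord ⟨g, (0, 0)⟩ ((x a).trace * (x e).trace) = N ∧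
      (N = 0 → ¬ coeffSpan k (x g) ≤ coeffSpan k (x a) * coeffSpan k (x e)) := by
    rw [coeffSpan_mul]
    convert hb.exists_natCast_coord_trace ((hb.isCorep a).mul (hb.isCorep e)) g using 5
    simp [Matrix.trace, Fintype.sum_prod_type, Finset.sum_mul_sum]
  choose N hN hN0 using hN
  have hmul (a) : (x a).trace * (x e).trace = ∑ g, (N a g : k) • (x g).trace := by
    simp_rw [← hN]; exact hb.trace_mul_trace a e
  have hrow (a) : ∑ g, N a g * d g = d e * d a := by
    have := congrArg (counit (R := k)) (hmul a)
    simp only [Bialgebra.counit_mul, (hb.isCorep _).counit_trace, map_sum, map_smul,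
      Fintype.card_fin, smul_eq_mul] at this
    rw [mul_comm (d e)]
    exact_mod_cast this.symm
  have hcol (g) : ∑ a, d a * N a g = d e * d g := by
    obtain ⟨X, -, hX, -⟩ := exists_regular_isCorep b
    have h := trace_regular_mul_trace hS b hX (hb.isCorep e)
    rw [hb.trace_regular hX] at h
    have := congrArg (b.coord ⟨g, (0, 0)⟩) h
    simp only [Finset.sum_mul, smul_mul_assoc, map_sum, map_smul, hN, hb.coord_trace,
      Fintype.card_fin, smul_eq_mul, mul_ite, mul_one, mul_zero, Finset.sum_ite_eq',
      Finset.mem_univ, if_true] at this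
    exact_mod_cast this
  have hw (a) : ∑ g, N a g • ((x g).trace * v) = d e • ((x a).trace * v) := by
    have := congrArg (· * v) (hmul a)
    simp only [mul_assoc, hv, Finset.sum_mul, smul_mul_assoc, mul_smul_comm,
      Nat.cast_smul_eq_nsmul] at this
    exact this.symm
  have key (φ : H →+ ℚ) : (d a : ℚ) * φ ((x g).trace * v) = d g * φ ((x a).trace * v) := by
    refine mul_eq_mul_of_eigenvector (n := fun a => (d a : ℚ)) (N := fun a g => (N a g : ℚ))
      (w := fun a => φ ((x a).trace * v)) (m := d e) (fun a => ?_) (fun a g => Nat.cast_nonneg _)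
      (fun a => by exact_mod_cast hrow a) (fun g => by exact_mod_cast hcol g) (fun a => ?_) ?_
    · exact_mod_cast Nat.pos_of_neZero (d a)
    · have := congrArg φ (hw a)
      simp only [map_sum, map_nsmul] at this
      simpa only [nsmul_eq_mul] using this
    · exact_mod_cast fun h => hN0 a g h hle
  rw [← sub_eq_zero, ← Module.forall_dual_apply_eq_zero_iff k]
  intro f
  rw [← Module.forall_dual_apply_eq_zero_iff ℚ]
  intro ψ
  have := key (ψ.toAddMonoidHom.comp f.toAddMonoidHom)
  rw [Nat.cast_smul_eq_nsmul, Nat.cast_smul_eq_nsmul, map_sub, map_sub, map_nsmul, map_nsmul,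
    map_nsmul, map_nsmul, sub_eq_zero, nsmul_eq_mul, nsmul_eq_mul]
  exact this

end IsCorepBasis

end CorepBasis

section Subcoalgebra

open HopfAlgebra

variable {k : Type} [Field k] {H : Type} [Ring H] [HopfAlgebra k H]

theorem IsSubcoalgebra.leftSlice_mem {C : Submodule k H} (hC : IsSubcoalgebra k H C)
    (f : H →ₗ[k] k) {z : H} (hz : z ∈ C) : leftSlice f z ∈ C := by
  obtain ⟨w, hw⟩ := hC z hz
  rw [leftSlice, LinearMap.comp_apply, LinearMap.comp_apply, ← hw]
  clear hw
  induction w with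
  | zero => simp
  | add x y hx hy => simpa only [map_add] using C.add_mem hx hy
  | tmul x y => simpa using C.smul_mem _ y.2

theorem IsSubcoalgebra.rightSlice_mem {C : Submodule k H} (hC : IsSubcoalgebra k H C)
    (f : H →ₗ[k] k) {z : H} (hz : z ∈ C) : rightSlice f z ∈ C := by
  obtain ⟨w, hw⟩ := hC z hz
  rw [rightSlice, LinearMap.comp_apply, LinearMap.comp_apply, ← hw]
  clear hw
  induction w with
  | zero => simp
  | add x y hx hy => simpa only [map_add] using C.add_mem hx hy
  | tmul x y => simpa using C.smul_mem _ x.2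

theorem range_map_subtype_mono {C D : Submodule k H} (h : C ≤ D) :
    LinearMap.range (TensorProduct.map C.subtype C.subtype) ≤
      LinearMap.range (TensorProduct.map D.subtype D.subtype) := by
  have : TensorProduct.map C.subtype C.subtype = TensorProduct.map D.subtype D.subtype ∘ₗ
      TensorProduct.map (Submodule.inclusion h) (Submodule.inclusion h) := by
    rw [← TensorProduct.map_comp, Submodule.subtype_comp_inclusion]
  rw [this]
  exact LinearMap.range_comp_le_range _ _

theorem isSubcoalgebra_iff_le {C : Submodule k H} : IsSubcoalgebra k H C ↔
    C ≤ (LinearMap.range (TensorProduct.map C.subtype C.subtype)).comap Coalgebra.comul := Iff.rfl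

theorem isSubcoalgebra_sSup {s : Set (Submodule k H)} (hs : ∀ C ∈ s, IsSubcoalgebra k H C) :
    IsSubcoalgebra k H (sSup s) :=
  isSubcoalgebra_iff_le.2 <| sSup_le fun C hC z hz =>
    range_map_subtype_mono (le_sSup hC) (hs C hC z hz)

theorem IsCorep.isSubcoalgebra {κ : Type*} [Fintype κ] [DecidableEq κ] {X : Matrix κ κ H}
    (hX : IsCorep k X) : IsSubcoalgebra k H (coeffSpan k X) := by
  refine isSubcoalgebra_iff_le.2 <| coeffSpan_le.2 fun i j => ?_
  rw [Submodule.mem_comap, hX.comul_apply]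
  exact Submodule.sum_mem _ fun l _ =>
    ⟨⟨_, mem_coeffSpan X i l⟩ ⊗ₜ ⟨_, mem_coeffSpan X l j⟩, by simp⟩

namespace IsCorepBasis

variable {ι : Type} [DecidableEq ι] {d : ι → ℕ} [∀ i, NeZero (d i)]
  {x : ∀ i, Matrix (Fin (d i)) (Fin (d i)) H}
  {b : Module.Basis (Σ i, Fin (d i) × Fin (d i)) k H}

omit [∀ i, NeZero (d i)] in
theorem coeffSpan_le_of_coord_ne_zero (hb : IsCorepBasis x b) {C : Submodule k H}
    (hC : IsSubcoalgebra k H C) {z : H} (hz : z ∈ C) {i j l} (h : b.coord ⟨i, (j, l)⟩ z ≠ 0) :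
    coeffSpan k (x i) ≤ C := by
  refine coeffSpan_le.2 fun s t => ?_
  have := hC.rightSlice_mem (b.coord ⟨i, (t, l)⟩) (hC.leftSlice_mem (b.coord ⟨i, (j, s)⟩) hz)
  rw [hb.rightSlice_leftSlice_coord] at this
  exact (C.smul_mem_iff h).1 this

omit [∀ i, NeZero (d i)] in
theorem exists_coeffSpan_le (hb : IsCorepBasis x b) {C : Submodule k H}
    (hC : IsSubcoalgebra k H C) (h0 : C ≠ ⊥) : ∃ i, coeffSpan k (x i) ≤ C := by
  obtain ⟨z, hz, hz0⟩ := C.exists_mem_ne_zero_of_ne_bot h0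
  obtain ⟨⟨i, j, l⟩, h⟩ : ∃ p, b.coord p z ≠ 0 := by
    by_contra! h
    exact hz0 (b.forall_coord_eq_zero_iff.1 h)
  exact ⟨i, hb.coeffSpan_le_of_coord_ne_zero hC hz h⟩

theorem isSimpleSubcoalgebra (hb : IsCorepBasis x b) (i) :
    IsSimpleSubcoalgebra k H (coeffSpan k (x i)) := by
  refine ⟨(hb.isCorep i).isSubcoalgebra, hb.coeffSpan_ne_bot i, fun D hD hDc hD0 => ?_⟩
  obtain ⟨g, hg⟩ := hb.exists_coeffSpan_le hDc hD0
  obtain rfl : i = g := by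
    by_contra hne
    have := hb.coord_of_mem hne (hD (hg (mem_coeffSpan (x g) 0 0))) 0 0
    simp [hb.coord_apply] at this
  exact le_antisymm hD hg

theorem exists_eq_coeffSpan (hb : IsCorepBasis x b) {D : Submodule k H}
    (hD : IsSimpleSubcoalgebra k H D) : ∃ i, D = coeffSpan k (x i) := by
  obtain ⟨i, hi⟩ := hb.exists_coeffSpan_le hD.1 hD.2.1
  exact ⟨i, (hD.2.2 _ hi (hb.isCorep i).isSubcoalgebra (hb.coeffSpan_ne_bot i)).symm⟩

omit [DecidableEq ι] [∀ i, NeZero (d i)] in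
theorem counit_trace (hb : IsCorepBasis x b) (i) :
    Coalgebra.counit (R := k) (x i).trace = (d i : k) := by
  rw [(hb.isCorep i).counit_trace, Fintype.card_fin]

variable [Fintype ι]

omit [∀ i, NeZero (d i)] in
theorem le_of_forall_coeffSpan_le (hb : IsCorepBasis x b) {C D : Submodule k H}
    (hC : IsSubcoalgebra k H C) (h : ∀ i, coeffSpan k (x i) ≤ C → coeffSpan k (x i) ≤ D) :
    C ≤ D := by
  intro z hz
  rw [hb.eq_sum_coord z]
  refine D.sum_mem fun i _ => D.sum_mem fun j _ => D.sum_mem fun l _ => ?_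
  by_cases h0 : b.coord ⟨i, (j, l)⟩ z = 0
  · simp [h0]
  · exact D.smul_mem _ (h i (hb.coeffSpan_le_of_coord_ne_zero hC hz h0) (mem_coeffSpan _ _ _))

theorem eq_trace_of_isCharacterOf [CharZero k] (hb : IsCorepBasis x b) {i} {c : H}
    (hc : IsCharacterOf k H c (coeffSpan k (x i))) : c = (x i).trace := by
  obtain ⟨hmem, hcomm, hε⟩ := hc
  obtain ⟨r, rfl⟩ := hb.eq_smul_trace_of_mem hmem hcomm
  rw [map_smul, hb.counit_trace, hb.finrank_coeffSpan, Nat.sqrt_eq', smul_eq_mul] at hε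
  have : (d i : k) ≠ 0 := Nat.cast_ne_zero.2 (NeZero.ne _)
  rw [mul_eq_right₀ this] at hε
  rw [hε, one_smul]

/-- The antipode permutes the simple subcoalgebras and their characters. -/
theorem exists_antipode [CharZero k] (hb : IsCorepBasis x b)
    (hS : Function.Bijective (antipode k : H →ₗ[k] H)) (i) :
    ∃ e, (coeffSpan k (x i)).map (antipode k) = coeffSpan k (x e) ∧
      antipode k (x i).trace = (x e).trace := by
  let x' (i) : Matrix (Fin (d i)) (Fin (d i)) H := Matrix.of fun j l => antipode k (x i l j)
  let b' : Module.Basis (Σ i, Fin (d i) × Fin (d i)) k H :=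
    (b.map (LinearEquiv.ofBijective _ hS)).reindex
      (Equiv.sigmaCongrRight fun _ => Equiv.prodComm _ _)
  have hb' : IsCorepBasis x' b' :=
    ⟨fun i => (hb.isCorep i).antipode, fun i j l => by simp [b', x', hb.basis_apply]⟩
  have hspan : (coeffSpan k (x i)).map (antipode k) = coeffSpan k (x' i) := by
    apply le_antisymm
    · exact Submodule.map_le_iff_le_comap.2 <| coeffSpan_le.2 fun j l => mem_coeffSpan (x' i) l j
    · exact coeffSpan_le.2 fun j l => Submodule.mem_map_of_mem (mem_coeffSpan (x i) l j)
  have htr : antipode k (x i).trace = (x' i).trace := by simp [Matrix.trace, x']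
  obtain ⟨e, he⟩ := hb.exists_eq_coeffSpan (hb'.isSimpleSubcoalgebra i)
  refine ⟨e, hspan.trans he, htr.trans (hb.eq_trace_of_isCharacterOf ?_)⟩
  rw [← he]
  refine ⟨trace_mem_coeffSpan _, (hb'.isCorep i).comm_comul_trace, ?_⟩
  rw [hb'.counit_trace, hb'.finrank_coeffSpan, Nat.sqrt_eq']

omit [Fintype ι] in
/-- The trivial simple subcoalgebra `k1`. -/
theorem exists_trivial [CharZero k] (hb : IsCorepBasis x b) :
    ∃ u, coeffSpan k (x u) = 1 ∧ (x u).trace = (d u : k) • (1 : H) := by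
  have h1 : IsSubcoalgebra k H 1 := by
    intro c hc
    obtain ⟨r, rfl⟩ := Submodule.mem_one.1 hc
    refine ⟨r • (⟨1, Submodule.one_le.1 le_rfl⟩ ⊗ₜ ⟨1, Submodule.one_le.1 le_rfl⟩), ?_⟩
    simp [Algebra.algebraMap_eq_smul_one, Algebra.TensorProduct.one_def]
  have hne : (1 : Submodule k H) ≠ ⊥ := by
    have : Nontrivial H := Bialgebra.nontrivial k
    exact one_ne_zero
  obtain ⟨u, hu⟩ := hb.exists_coeffSpan_le h1 hne
  obtain ⟨r, hr⟩ := Submodule.mem_one.1 (hu (trace_mem_coeffSpan (x u)))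
  rw [Algebra.algebraMap_eq_smul_one] at hr
  have hrd : r = d u := by
    rw [← hb.counit_trace, ← hr]
    simp
  have hd : (d u : k) ≠ 0 := Nat.cast_ne_zero.2 (NeZero.ne _)
  have htr : (x u).trace = (d u : k) • (1 : H) := by rw [← hr, hrd]
  refine ⟨u, le_antisymm hu (Submodule.one_le.2 ?_), htr⟩
  exact (Submodule.smul_mem_iff _ hd).1 (htr ▸ trace_mem_coeffSpan (x u))

/-- The irreducible characters acting on `v` through the counit are closed under constituents of
products. -/
theorem trace_mul_eq_of_le [CharZero k] (hb : IsCorepBasis x b)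
    (hS : Function.Bijective (antipode k : H →ₗ[k] H)) {v : H} {i j l}
    (hi : (x i).trace * v = (d i : k) • v) (hj : (x j).trace * v = (d j : k) • v)
    (hle : coeffSpan k (x l) ≤ coeffSpan k (x i) * coeffSpan k (x j)) :
    (x l).trace * v = (d l : k) • v := by
  have h := hb.smul_trace_mul_eq hS hj hle
  have hd : (d i : k) ≠ 0 := Nat.cast_ne_zero.2 (NeZero.ne _)
  rw [hi, smul_comm] at h
  exact smul_right_injective H hd h

/-- The irreducible characters acting on `v` through the counit are closed under duality. -/
theorem trace_mul_eq_of_map_antipode [CharZero k] (hb : IsCorepBasis x b)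
    (hS : Function.Bijective (antipode k : H →ₗ[k] H)) {v : H} {i e}
    (hi : (x i).trace * v = (d i : k) • v)
    (he : (coeffSpan k (x i)).map (antipode k) = coeffSpan k (x e)) :
    (x e).trace * v = (d e : k) • v := by
  obtain ⟨u, hu, hut⟩ := hb.exists_trivial
  have hle : coeffSpan k (x u) ≤ coeffSpan k (x e) * coeffSpan k (x i) := by
    rw [hu, Submodule.one_le, ← he]
    have h1 := (hb.isCorep i).sum_antipode_mul 0 0
    rw [Matrix.one_apply_eq] at h1
    rw [← h1]
    exact Submodule.sum_mem _ fun l _ => Submodule.mul_mem_mul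
      (Submodule.mem_map_of_mem (mem_coeffSpan _ _ _)) (mem_coeffSpan _ _ _)
  have h := hb.smul_trace_mul_eq hS hi hle
  have hd : (d u : k) ≠ 0 := Nat.cast_ne_zero.2 (NeZero.ne _)
  rw [hut, smul_one_mul, smul_comm] at h
  exact (smul_right_injective H hd h).symm

/-- The sum of the simple subcoalgebras whose characters act on `v` through the counit is a Hopf
subalgebra. -/
theorem exists_isHopfSubalgebra [CharZero k] (hb : IsCorepBasis x b)
    (hS : Function.Bijective (antipode k : H →ₗ[k] H)) (v : H) :
    ∃ A : Subalgebra k H, IsHopfSubalgebra k H A ∧ A.toSubmodule =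
      sSup {D | ∃ i, D = coeffSpan k (x i) ∧ (x i).trace * v = (d i : k) • v} := by
  set s := {D | ∃ i, D = coeffSpan k (x i) ∧ (x i).trace * v = (d i : k) • v} with hs
  have hone : (1 : H) ∈ sSup s := by
    obtain ⟨u, hu, hut⟩ := hb.exists_trivial
    exact le_sSup (show coeffSpan k (x u) ∈ s from ⟨u, rfl, by rw [hut, smul_one_mul]⟩)
      (hu ▸ Submodule.one_le.1 le_rfl)
  have hmul : sSup s * sSup s ≤ sSup s := by
    rw [sSup_eq_iSup', Submodule.iSup_mul, iSup_le_iff]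
    rintro ⟨_, i, rfl, hi⟩
    rw [Submodule.mul_iSup, iSup_le_iff]
    rintro ⟨_, j, rfl, hj⟩
    rw [← sSup_eq_iSup']
    refine hb.le_of_forall_coeffSpan_le ?_ fun l hl =>
      le_sSup ⟨l, rfl, hb.trace_mul_eq_of_le hS hi hj hl⟩
    rw [coeffSpan_mul]
    exact ((hb.isCorep i).mul (hb.isCorep j)).isSubcoalgebra
  have hantipode : sSup s ≤ (sSup s).comap (antipode k) := by
    refine sSup_le ?_
    rintro _ ⟨i, rfl, hi⟩
    obtain ⟨e, he, -⟩ := hb.exists_antipode hS i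
    rw [← Submodule.map_le_iff_le_comap]
    exact le_sSup ⟨e, he, hb.trace_mul_eq_of_map_antipode hS hi he⟩
  refine ⟨(sSup s).toSubalgebra hone fun _ _ ha hb => hmul (Submodule.mul_mem_mul ha hb),
    ⟨?_, fun z hz => hantipode hz⟩, Submodule.toSubalgebra_toSubmodule _ _ _⟩
  rw [Submodule.toSubalgebra_toSubmodule]
  refine isSubcoalgebra_sSup ?_
  rintro _ ⟨i, rfl, -⟩
  exact (hb.isCorep i).isSubcoalgebra

theorem conjK_eq (hb : IsCorepBasis x b) (K : Subalgebra k H) (Λ : H) (g) :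
    conjK k H K Λ (coeffSpan k (x g)) = sSup {D | ∃ i, D = coeffSpan k (x i) ∧
      (x i).trace * ((x g).trace * Λ) = (d i : k) • ((x g).trace * Λ)} := by
  rw [conjK]
  congr 1
  ext D
  constructor
  · rintro ⟨hD, h⟩
    obtain ⟨i, rfl⟩ := hb.exists_eq_coeffSpan hD
    refine ⟨i, rfl, ?_⟩
    rw [← hb.counit_trace]
    exact h _ (trace_mem_coeffSpan _) (hb.isCorep i).comm_comul_trace _ (trace_mem_coeffSpan _)
      (hb.isCorep g).comm_comul_trace
  · rintro ⟨i, rfl, h⟩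
    refine ⟨hb.isSimpleSubcoalgebra i, fun y hy hyc z hz hzc => ?_⟩
    obtain ⟨r, rfl⟩ := hb.eq_smul_trace_of_mem hy hyc
    obtain ⟨t, rfl⟩ := hb.eq_smul_trace_of_mem hz hzc
    rw [map_smul, hb.counit_trace, smul_mul_assoc, smul_mul_assoc, mul_smul_comm, h, smul_assoc,
      smul_comm t]

end IsCorepBasis

end Subcoalgebra

section Statements

variable [FiniteDimensional k H] [IsSemisimpleRing H]

/-- Proposition 25: the set
`ᶜK = {d ∈ Irr(H^*) | d·c·Λ_K = ε(d)·c·Λ_K}` is closed under multiplication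
(every irreducible constituent of a product `d·d'` of members again belongs
to it — by the Nichols–Zoeller correspondence the constituents of `d·d'` are
the characters of the simple subcoalgebras of `C_d·C_{d'}`) and closed under
duality `d ↦ d^* = S(d)`; consequently the span `ᶜK` of the corresponding
simple subcoalgebras is a Hopf subalgebra of `H`. -/
theorem statement_8 (K : Subalgebra k H) (hK : IsHopfSubalgebra k H K)
    (Λ : H) (hΛ : IsIdempotentIntegral k H K Λ)
    (C : Submodule k H) (hC : IsSimpleSubcoalgebra k H C)
    (c : H) (hc : IsCharacterOf k H c C) :
    (∀ (D D' E : Submodule k H) (d d' e : H),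
      IsSimpleSubcoalgebra k H D → IsSimpleSubcoalgebra k H D' →
      IsSimpleSubcoalgebra k H E →
      IsCharacterOf k H d D → IsCharacterOf k H d' D' → IsCharacterOf k H e E →
      d * (c * Λ) = Coalgebra.counit (R := k) d • (c * Λ) →
      d' * (c * Λ) = Coalgebra.counit (R := k) d' • (c * Λ) →
      E ≤ D * D' →
      e * (c * Λ) = Coalgebra.counit (R := k) e • (c * Λ)) ∧
    (∀ (D : Submodule k H) (d : H),
      IsSimpleSubcoalgebra k H D → IsCharacterOf k H d D →
      d * (c * Λ) = Coalgebra.counit (R := k) d • (c * Λ) →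
      HopfAlgebra.antipode (R := k) d * (c * Λ) =
        Coalgebra.counit (R := k) (HopfAlgebra.antipode (R := k) d) • (c * Λ)) ∧
    (∃ A : Subalgebra k H, A.toSubmodule = conjK k H K Λ C ∧
      IsHopfSubalgebra k H A) := by
  obtain ⟨n, dim, hdim, x, b, hx, hxb⟩ := exists_isCorep_basis (k := k) (H := H)
  have hb : IsCorepBasis x b := ⟨hx, hxb⟩
  have hS := antipode_bijective k H
  obtain ⟨g, rfl⟩ := hb.exists_eq_coeffSpan hC
  obtain rfl := hb.eq_trace_of_isCharacterOf hc
  refine ⟨?_, ?_, ?_⟩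
  · intro D D' E d d' e hD hD' hE hd hd' he hdv hdv' hle
    obtain ⟨i, rfl⟩ := hb.exists_eq_coeffSpan hD
    obtain ⟨j, rfl⟩ := hb.exists_eq_coeffSpan hD'
    obtain ⟨l, rfl⟩ := hb.exists_eq_coeffSpan hE
    obtain rfl := hb.eq_trace_of_isCharacterOf hd
    obtain rfl := hb.eq_trace_of_isCharacterOf hd'
    obtain rfl := hb.eq_trace_of_isCharacterOf he
    rw [hb.counit_trace] at hdv hdv' ⊢
    exact hb.trace_mul_eq_of_le hS hdv hdv' hle
  · intro D d hD hd hdv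
    obtain ⟨i, rfl⟩ := hb.exists_eq_coeffSpan hD
    obtain rfl := hb.eq_trace_of_isCharacterOf hd
    obtain ⟨e, he, het⟩ := hb.exists_antipode hS i
    rw [hb.counit_trace] at hdv
    rw [het, hb.counit_trace]
    exact hb.trace_mul_eq_of_map_antipode hS hdv he
  · obtain ⟨A, hA, hAs⟩ := hb.exists_isHopfSubalgebra hS ((x g).trace * Λ)
    exact ⟨A, hAs.trans (hb.conjK_eq K Λ g).symm, hA⟩

end Statements

end

end MackeyPaper
end
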